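/- For general lines L_1,…,L_6 in P^3 (i.e., there exists a nonzero polynomial P in the 48 coordinates of spanning vectors a_1,b_1,…,a_6,b_6 ∈ ℂ^4 such that whenever P does not vanish, each pair a_i,b_i is linearly independent, the subspaces L_i = span{a_i,b_i} pairwise intersect only in 0, and the following holds): writing I^{(m)} = ⋂_{i=1}^6 I(L_i)^m and α(J) for the least degree d such that the ideal J contains a nonzero homogeneous polynomial of degree d, the Waldschmidt constant satisfies inf_{m ≥ 1} α(I^{(m)})/m = 72/19. -/

import Mathlib

open MvPolynomial

noncomputable section

abbrev C4 : Type := Fin 4 → ℂ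
abbrev R3 : Type := MvPolynomial (Fin 4) ℂ

/-- The homogeneous ideal of the line in `P^3` corresponding to a linear subspace
`L ⊆ ℂ^4`: all polynomials vanishing identically on `L`. -/
def lineIdeal (L : Submodule ℂ C4) : Ideal R3 where
  carrier := {F | ∀ v ∈ L, eval v F = 0}
  add_mem' := by
    intro a b ha hb v hv
    simp [ha v hv, hb v hv]
  zero_mem' := by
    intro v hv
    simp
  smul_mem' := by
    intro c F hF v hv
    simp [smul_eq_mul, hF v hv]

/-- The initial degree `α(J)` of an ideal `J`: the least `d` such that `J`
contains a nonzero homogeneous polynomial of degree `d`. -/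
def alphaDeg (J : Ideal R3) : ℕ :=
  sInf {d | ∃ F ∈ J, F ≠ 0 ∧ MvPolynomial.IsHomogeneous F d}

/-- A property `Q` holds for `s` *general* lines in `P^3`: there is a nonzero
polynomial `P` in the `8s` coordinates of spanning vectors such that whenever
`P` does not vanish, each pair of vectors is linearly independent, the spanned
planes are pairwise disjoint, and `Q` holds for these lines. -/
def GeneralLines (s : ℕ) (Q : (Fin s → Submodule ℂ C4) → Prop) : Prop :=
  ∃ P : MvPolynomial (Fin s × Fin 2 × Fin 4) ℂ, P ≠ 0 ∧
    ∀ v : Fin s → Fin 2 → C4,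
      MvPolynomial.eval (fun p => v p.1 p.2.1 p.2.2) P ≠ 0 →
      (∀ i, LinearIndependent ℂ ![v i 0, v i 1]) ∧
      (∀ i j, i ≠ j →
        Submodule.span ℂ {v i 0, v i 1} ⊓ Submodule.span ℂ {v j 0, v j 1} = ⊥) ∧
      Q (fun i => Submodule.span ℂ {v i 0, v i 1})

/-!
Lower bound: through a general point of `P^3` passes a rational curve of degree `19` which meets
each of the six lines in `12` points. A form of degree `d` with multiplicity `n` along the lines has
`72 n` zeros on the curve, so it vanishes on the curve, hence everywhere, if `19 d < 72 n`. The
curves form the solutions of a system of equations with integral coefficients in the lines and the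
point. The system has a solution over `ℤ/31` at which the derivative in the unknowns is surjective;
Hensel's lemma makes the family of solutions dominant in characteristic `0`, and by Chevalley's
theorem it then has solutions for general complex lines and points.

Upper bound: there is a form of degree `12` with multiplicity `4` along one of the lines and `3`
along the other five, and the product of the six forms obtained in this way has degree `72` and
multiplicity `19`. Five products of two quadrics, each quadric through three of the lines, are
quartics containing all the lines. Along the chosen line their linear parts, binary cubics with
values in the conormal bundle, have three quadratic syzygies. A `3 × 3` determinant of combinations
of the quartics with the coefficients of these syzygies has multiplicity `3` along all the lines,
and `4` along the chosen one, because on the linear parts the vector of the binary quadratic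
monomials annihilates the matrix. The determinant is nonzero, since it is nonzero at the reference
lines and point modulo `31`.
-/

namespace SixLines

section Specialization

open PrimeSpectrum TensorProduct

theorem exists_ringHom_extending_of_mem_range_comap {R A K : Type*} [CommRing R] [CommRing A]
    [Algebra R A] [Algebra.FiniteType R A] [Field K] [IsAlgClosed K] (φ : R →+* K)
    (hφ : ⟨RingHom.ker φ, RingHom.ker_isPrime φ⟩ ∈ Set.range (comap (algebraMap R A))) :
    ∃ ψ : A →+* K, ψ.comp (algebraMap R A) = φ := by
  let p : PrimeSpectrum R := ⟨RingHom.ker φ, RingHom.ker_isPrime φ⟩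
  have := p.isPrime
  let κ := p.asIdeal.ResidueField
  let : Algebra R K := φ.toAlgebra
  let : Algebra κ K := (Ideal.ResidueField.lift p.asIdeal φ le_rfl fun s hs =>
    (show φ s ≠ 0 from hs).isUnit).toAlgebra
  have : IsScalarTower R κ K := .of_algebraMap_eq fun r =>
    (Ideal.ResidueField.lift_algebraMap p.asIdeal φ le_rfl _ r).symm
  have : Nontrivial (κ ⊗[R] A) := (nontrivial_iff_mem_rangeComap p).2 hφ
  have : Nontrivial (K ⊗[R] A) :=
    (Algebra.TensorProduct.cancelBaseChange R κ K K A).injective.nontrivial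
  obtain ⟨m, hm⟩ := Ideal.exists_maximal (K ⊗[R] A)
  let : Field ((K ⊗[R] A) ⧸ m) := Ideal.Quotient.field m
  have : Module.Finite K ((K ⊗[R] A) ⧸ m) := finite_of_finite_type_of_isJacobsonRing K _
  let ψ : (K ⊗[R] A) →ₐ[K] K := (IsAlgClosed.lift (R := K) (S := (K ⊗[R] A) ⧸ m)).comp
    (Ideal.Quotient.mkₐ K m)
  refine ⟨((ψ.restrictScalars R).comp Algebra.TensorProduct.includeRight).toRingHom, ?_⟩
  ext r
  exact ((ψ.restrictScalars R).comp Algebra.TensorProduct.includeRight).commutes r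

theorem exists_ne_zero_forall_exists_ringHom_extending {R A : Type*} [CommRing R] [IsDomain R]
    [IsNoetherianRing R] [CommRing A] {ι : R →+* A} (hfin : ι.FiniteType)
    (hinj : Function.Injective ι) (K : Type*) [Field K] [IsAlgClosed K] :
    ∃ f : R, f ≠ 0 ∧ ∀ φ : R →+* K, φ f ≠ 0 → ∃ ψ : A →+* K, ψ.comp ι = φ := by
  algebraize [ι]
  have hfp : (algebraMap R A).FinitePresentation := RingHom.FinitePresentation.of_finiteType.1 hfin
  obtain ⟨S, hS⟩ := exists_constructibleSetData_iff.2 (isConstructible_range_comap hfp)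
  have hbot : (⊥ : PrimeSpectrum R) ∈ S.toSet := by
    rw [hS]
    obtain ⟨q, hq, hq'⟩ := Ideal.exists_comap_eq_of_mem_minimalPrimes_of_injective hinj ⊥
      (by rw [IsDomain.minimalPrimes_eq_singleton_bot]; rfl)
    exact ⟨⟨q, hq⟩, PrimeSpectrum.ext hq'⟩
  simp only [ConstructibleSetData.toSet, Set.mem_iUnion] at hbot
  obtain ⟨D, hD, hg, hf⟩ := hbot
  have hg : ∀ i, D.g i = 0 := fun i => by simpa using hg (Set.mem_range_self i)
  refine ⟨D.f, fun h => hf (by simp [h]), fun φ hφ =>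
    exists_ringHom_extending_of_mem_range_comap φ ?_⟩
  rw [← hS]
  simp only [ConstructibleSetData.toSet, Set.mem_iUnion]
  refine ⟨D, hD, ?_, fun h => hφ (h (Set.mem_singleton _))⟩
  rintro _ ⟨i, rfl⟩
  simp [hg]

end Specialization

section Hensel

open TrivSqZeroExt

variable {σ τ ρ : Type*}

/-- Evaluation of integral polynomials at a point with coordinates in any commutative ring. -/
def evalInt {B : Type*} [CommRing B] (x : σ → B) : MvPolynomial σ ℤ →+* B :=
  eval₂Hom (Int.castRingHom B) x

theorem map_evalInt {A B : Type*} [CommRing A] [CommRing B] (φ : A →+* B) (x : σ → A)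
    (f : MvPolynomial σ ℤ) : φ (evalInt x f) = evalInt (fun i => φ (x i)) f := by
  simp only [evalInt, map_eval₂Hom, RingHom.eq_intCast']

@[simp]
theorem evalInt_X {B : Type*} [CommRing B] (x : σ → B) (i : σ) : evalInt x (X i) = x i :=
  eval₂Hom_X' _ _ _

theorem exists_evalInt_ne_zero {A : Type*} [CommRing A] [IsDomain A] [CharZero A]
    {P : MvPolynomial σ ℤ} (hP : P ≠ 0) : ∃ x : σ → A, evalInt x P ≠ 0 := by
  by_contra! h
  refine hP (map_injective (Int.castRingHom A) Int.cast_injective (MvPolynomial.funext fun x => ?_))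
  simpa [evalInt, eval_map] using h x

/-- The dual-number point `(a, x + ε δ)`; polynomials are differentiated along the second block of
variables by evaluating them there. -/
def tangentPoint {k : Type*} [CommRing k] (a : σ → k) (x δ : τ → k) : σ ⊕ τ → DualNumber k :=
  Sum.elim (fun s => inl (a s)) fun t => inl (x t) + inr (δ t)

/-- `(a, x)` is a common zero of the integral polynomials `f` in two blocks of variables, and the
differential of `f` along the second block is surjective there. -/
def IsSmoothZero {k : Type*} [CommRing k] (f : ρ → MvPolynomial (σ ⊕ τ) ℤ) (a : σ → k)
    (x : τ → k) : Prop :=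
  ∀ r : ρ → k, ∃ δ : τ → k, ∀ j, evalInt (tangentPoint a x δ) (f j) = inr (r j)

theorem fst_evalInt_tangentPoint {k : Type*} [CommRing k] (a : σ → k) (x δ : τ → k)
    (f : MvPolynomial (σ ⊕ τ) ℤ) :
    (evalInt (tangentPoint a x δ) f).fst = evalInt (Sum.elim a x) f := by
  have h := map_evalInt (fstHom ℤ k k).toRingHom (tangentPoint a x δ) f
  refine h.trans (congrArg (evalInt · f) ?_)
  ext (s | t) <;> simp [tangentPoint]

theorem evalInt_add_mul_of_sq_eq_zero {B : Type*} [CommRing B] {e : B} (he : e * e = 0)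
    (a : σ → ℤ) (x δ : τ → ℤ) (f : MvPolynomial (σ ⊕ τ) ℤ) :
    evalInt (Sum.elim (fun s => (a s : B)) fun t => (x t : B) + δ t * e) f =
      ((evalInt (tangentPoint a x δ) f).fst : B) +
        ((evalInt (tangentPoint a x δ) f).snd : B) * e := by
  let φ : DualNumber ℤ →+* B :=
    (DualNumber.lift ⟨(Algebra.ofId ℤ B, e), he, fun n => mul_comm _ _⟩ : _ →ₐ[ℤ] B).toRingHom
  have hφ : ∀ u, φ u = (u.fst : B) + (u.snd : B) * e := fun u => by
    simp [φ, DualNumber.lift_apply_apply]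
  rw [← hφ, map_evalInt]
  congr 1
  ext (s | t) <;> simp [hφ, tangentPoint]

theorem intCast_snd_evalInt_tangentPoint {k : Type*} [CommRing k] (a : σ → ℤ) (x δ : τ → ℤ)
    (f : MvPolynomial (σ ⊕ τ) ℤ) :
    ((evalInt (tangentPoint a x δ) f).snd : k) =
      (evalInt (tangentPoint (fun s => (a s : k)) (fun t => (x t : k))
        fun t => (δ t : k)) f).snd := by
  have h := congrArg snd
    (evalInt_add_mul_of_sq_eq_zero (DualNumber.eps_mul_eps (R := k)) a x δ f)
  have hpt : Sum.elim (fun s => (a s : DualNumber k))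
      (fun t => (x t : DualNumber k) + (δ t : DualNumber k) * DualNumber.eps) =
      tangentPoint (fun s => (a s : k)) (fun t => (x t : k)) fun t => (δ t : k) := by
    ext (s | t) <;> simp [tangentPoint]
  simpa [hpt] using h.symm

theorem mul_self_dvd_evalInt_sub (q : ℤ) (a : σ → ℤ) (x δ : τ → ℤ) (f : MvPolynomial (σ ⊕ τ) ℤ) :
    q * q ∣ evalInt (Sum.elim a fun t => x t + δ t * q) f -
      ((evalInt (tangentPoint a x δ) f).fst + (evalInt (tangentPoint a x δ) f).snd * q) := by
  rw [← Ideal.mem_span_singleton, ← Ideal.Quotient.eq, map_evalInt]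
  let B := ℤ ⧸ Ideal.span {q * q}
  have he : (q : B) * q = 0 := by
    rw [← Int.cast_mul]
    exact Ideal.Quotient.eq_zero_iff_mem.2 (Ideal.mem_span_singleton_self _)
  convert evalInt_add_mul_of_sq_eq_zero he a x δ f using 2
  · ext (s | t) <;> simp
  · simp

variable {f : ρ → MvPolynomial (σ ⊕ τ) ℤ}

theorem IsSmoothZero.evalInt_eq_zero {k : Type*} [CommRing k] {a : σ → k} {x : τ → k}
    (h : IsSmoothZero f a x) (j : ρ) : evalInt (Sum.elim a x) (f j) = 0 := by
  obtain ⟨δ, hδ⟩ := h 0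
  rw [← fst_evalInt_tangentPoint a x δ, hδ, fst_inr]

variable {p : ℕ} {a : σ → ℤ} {x₀ : τ → ZMod p}

theorem IsSmoothZero.newton_step (h : IsSmoothZero f (fun s => (a s : ZMod p)) x₀) {n : ℕ}
    {x : τ → ℤ} (hx : ∀ t, (x t : ZMod p) = x₀ t)
    (hfx : ∀ j, (p : ℤ) ^ (n + 1) ∣ evalInt (Sum.elim a x) (f j)) :
    ∃ δ : τ → ℤ, ∀ j, (p : ℤ) ^ (n + 2) ∣
      evalInt (Sum.elim a fun t => x t + δ t * (p : ℤ) ^ (n + 1)) (f j) := by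
  choose c hc using hfx
  obtain ⟨δ₀, hδ₀⟩ := h fun j => -(c j : ZMod p)
  choose δ hδ using fun t => ZMod.intCast_surjective (δ₀ t)
  refine ⟨δ, fun j => ?_⟩
  set q : ℤ := (p : ℤ) ^ (n + 1) with hq
  have hexp := mul_self_dvd_evalInt_sub q a x δ (f j)
  set F := evalInt (tangentPoint a x δ) (f j) with hF
  have hfst : F.fst = q * c j := by rw [hF, fst_evalInt_tangentPoint, hc]
  have hsnd : (p : ℤ) ∣ c j + F.snd := by
    rw [← ZMod.intCast_zmod_eq_zero_iff_dvd, Int.cast_add, hF, intCast_snd_evalInt_tangentPoint]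
    simp only [hx, hδ, hδ₀, snd_inr, add_neg_cancel]
  have hpq : (p : ℤ) ^ (n + 2) ∣ F.fst + F.snd * q := by
    rw [hfst, show q * c j + F.snd * q = (c j + F.snd) * q by ring, pow_succ', ← hq]
    exact mul_dvd_mul_right hsnd q
  have hqq : (p : ℤ) ^ (n + 2) ∣ q * q := by
    rw [hq, ← pow_add]
    exact pow_dvd_pow _ (by lia)
  exact (dvd_sub_left hpq).1 (hqq.trans hexp)

theorem IsSmoothZero.exists_lift (h : IsSmoothZero f (fun s => (a s : ZMod p)) x₀) (n : ℕ) :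
    ∃ x : τ → ℤ, (∀ t, (x t : ZMod p) = x₀ t) ∧
      ∀ j, (p : ℤ) ^ (n + 1) ∣ evalInt (Sum.elim a x) (f j) := by
  induction n with
  | zero =>
    choose x hx using fun t => ZMod.intCast_surjective (x₀ t)
    refine ⟨x, hx, fun j => ?_⟩
    rw [zero_add, pow_one, ← ZMod.intCast_zmod_eq_zero_iff_dvd, ← h.evalInt_eq_zero j]
    exact (map_evalInt (Int.castRingHom (ZMod p)) _ _).trans
      (congrArg (evalInt · (f j)) (by ext (s | t) <;> simp [hx]))
  | succ n ih =>
    obtain ⟨x, hx, hfx⟩ := ih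
    obtain ⟨δ, hδ⟩ := h.newton_step hx hfx
    exact ⟨_, fun t => by simp [hx], hδ⟩

theorem eq_zero_of_forall_evalInt_eq_zero [NeZero p] {a₀ : σ → ZMod p} {r : MvPolynomial σ ℤ}
    (h : ∀ a : σ → ℤ, (∀ s, (a s : ZMod p) = a₀ s) → evalInt a r = 0) : r = 0 := by
  refine funext_set (fun s => {b : ℤ | (b : ZMod p) = a₀ s}) (fun s => ?_) fun a ha => ?_
  · obtain ⟨b, hb⟩ := ZMod.intCast_surjective (a₀ s)
    have hinj : Function.Injective fun k : ℕ => b + p * (k : ℤ) := fun k l hkl => by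
      simpa [NeZero.ne p] using hkl
    refine (Set.infinite_range_of_injective hinj).mono ?_
    rintro _ ⟨k, rfl⟩
    simp [hb]
  · rw [map_zero, ← h a fun s => ha s trivial]
    rfl

theorem IsSmoothZero.evalInt_eq_zero_of_mul_mem_span [Fact p.Prime]
    (h : IsSmoothZero f (fun s => (a s : ZMod p)) x₀) {g : MvPolynomial (σ ⊕ τ) ℤ}
    (hg : evalInt (Sum.elim (fun s => (a s : ZMod p)) x₀) g ≠ 0) {r : MvPolynomial σ ℤ}
    (hr : g * rename Sum.inl r ∈ Ideal.span (Set.range f)) : evalInt a r = 0 := by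
  by_contra hne
  obtain ⟨n, hn⟩ : FiniteMultiplicity (p : ℤ) (evalInt a r) :=
    Int.finiteMultiplicity_iff.2 ⟨by simpa using (Fact.out : p.Prime).ne_one, hne⟩
  obtain ⟨x, hx, hfx⟩ := h.exists_lift n
  have hgr : (p : ℤ) ^ (n + 1) ∣ evalInt (Sum.elim a x) g * evalInt a r := by
    have hle : Ideal.span (Set.range f) ≤
        (Ideal.span {(p : ℤ) ^ (n + 1)}).comap (evalInt (Sum.elim a x)) := by
      rw [Ideal.span_le]
      rintro _ ⟨j, rfl⟩
      exact Ideal.mem_span_singleton.2 (hfx j)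
    have hmem := Ideal.mem_span_singleton.1 (hle hr)
    have hren : evalInt (Sum.elim a x) (rename Sum.inl r) = evalInt a r := eval₂_rename ..
    rwa [map_mul, hren] at hmem
  refine hn ((IsCoprime.pow_left ?_).dvd_of_dvd_mul_left hgr)
  rw [(Nat.prime_iff_prime_int.1 Fact.out).coprime_iff_not_dvd,
    ← ZMod.intCast_zmod_eq_zero_iff_dvd]
  convert hg
  refine (map_evalInt (Int.castRingHom (ZMod p)) _ g).trans (congrArg (evalInt · g) ?_)
  ext (s | t) <;> simp [hx]

theorem IsSmoothZero.eq_zero_of_pow_mul_rename_mem_span [Fact p.Prime] {a₀ : σ → ZMod p}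
    (h : IsSmoothZero f a₀ x₀) {g : MvPolynomial (σ ⊕ τ) ℤ}
    (hg : evalInt (Sum.elim a₀ x₀) g ≠ 0) {r : MvPolynomial σ ℤ} {n : ℕ}
    (hr : g ^ n * rename Sum.inl r ∈ Ideal.span (Set.range f)) : r = 0 := by
  refine eq_zero_of_forall_evalInt_eq_zero (a₀ := a₀) fun a ha => ?_
  obtain rfl : (fun s => (a s : ZMod p)) = a₀ := funext ha
  exact h.evalInt_eq_zero_of_mul_mem_span (by simpa using pow_ne_zero n hg) hr

theorem IsSmoothZero.exists_ne_zero_forall_exists_evalInt_eq_zero [Finite σ] [Finite τ]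
    [Fact p.Prime] {a₀ : σ → ZMod p} (h : IsSmoothZero f a₀ x₀) {g : MvPolynomial (σ ⊕ τ) ℤ}
    (hg : evalInt (Sum.elim a₀ x₀) g ≠ 0) (K : Type*) [Field K] [IsAlgClosed K] :
    ∃ P : MvPolynomial σ ℤ, P ≠ 0 ∧ ∀ a : σ → K, evalInt a P ≠ 0 → ∃ x : τ → K,
      (∀ j, evalInt (Sum.elim a x) (f j) = 0) ∧ evalInt (Sum.elim a x) g ≠ 0 := by
  let S := MvPolynomial (σ ⊕ τ) ℤ ⧸ Ideal.span (Set.range f)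
  let A := Localization.Away (Ideal.Quotient.mk _ g : S)
  let π : MvPolynomial (σ ⊕ τ) ℤ →+* A := (algebraMap S A).comp (Ideal.Quotient.mk _)
  let ι : MvPolynomial σ ℤ →+* A := π.comp (rename Sum.inl).toRingHom
  have hfin : ι.FiniteType := by
    have : Algebra.FiniteType ℤ A := .trans (S := S) inferInstance inferInstance
    refine RingHom.FiniteType.of_comp_finiteType (f := Int.castRingHom _) ?_
    rw [RingHom.ext_int (ι.comp _) (algebraMap ℤ A)]
    exact RingHom.finiteType_algebraMap.2 this
  have hinj : Function.Injective ι := by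
    refine (injective_iff_map_eq_zero _).2 fun r hr => ?_
    obtain ⟨⟨_, n, rfl⟩, hn⟩ := (IsLocalization.map_eq_zero_iff
      (.powers (Ideal.Quotient.mk _ g : S)) A (Ideal.Quotient.mk _ (rename Sum.inl r))).1 hr
    exact h.eq_zero_of_pow_mul_rename_mem_span hg
      (Ideal.Quotient.eq_zero_iff_mem.1 (by rw [map_mul, map_pow]; exact hn))
  obtain ⟨P, hP, hψ⟩ := exists_ne_zero_forall_exists_ringHom_extending hfin hinj K
  refine ⟨P, hP, fun a ha => ?_⟩
  obtain ⟨ψ, hψ⟩ := hψ (evalInt a) ha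
  let x : τ → K := fun t => ψ (π (X (Sum.inr t)))
  have hpt : evalInt (Sum.elim a x) = ψ.comp π := by
    refine ringHom_ext' (RingHom.ext_int _ _) ?_
    rintro (s | t)
    · have hs := RingHom.congr_fun hψ (X s)
      rw [evalInt_X] at hs ⊢
      rw [Sum.elim_inl, ← hs]
      exact congrArg (fun z => ψ (π z)) (rename_X ..)
    · simp [x]
  refine ⟨x, fun j => ?_, ?_⟩
  · have hj : (Ideal.Quotient.mk (Ideal.span (Set.range f))) (f j) = 0 :=
      Ideal.Quotient.eq_zero_iff_mem.2 (Ideal.subset_span ⟨j, rfl⟩)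
    simp [hpt, π, hj]
  · rw [hpt]
    exact ((IsLocalization.Away.algebraMap_isUnit (Ideal.Quotient.mk _ g : S)).map ψ).ne_zero

end Hensel

section ListArithmetic

/-- The row operation `c w - d v` modulo `p` on lists of natural numbers. -/
def rowOp (p c d : ℕ) (v w : List ℕ) : List ℕ :=
  List.zipWith (fun x y => (c * y + (p - 1) * d * x) % p) v w

/-- Row reduction modulo `p` on lists of natural numbers: `spans p n vs` checks that the residues of
`vs` span `(ℤ/p)^n`. A row `v` with nonzero head is used to clear the heads of all the rows. -/
def spans (p : ℕ) : ℕ → List (List ℕ) → Bool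
  | 0, _ => true
  | n + 1, vs =>
    match vs.find? fun v => v.headD 0 % p != 0 with
    | none => false
    | some v => spans p n <| vs.map fun w => rowOp p (v.headD 0) (w.headD 0) v.tail w.tail

/-- The linear combination of a list of vectors with natural number coefficients. -/
def lincomb {M : Type*} [AddCommMonoid M] (l : List ℕ) (b : List M) : M :=
  (List.zipWith (· • ·) l b).sum

section

variable {M : Type*} [AddCommMonoid M]

@[simp]
theorem lincomb_nil (b : List M) : lincomb [] b = 0 := rfl

@[simp]
theorem lincomb_nil_right (l : List ℕ) : lincomb l ([] : List M) = 0 := by simp [lincomb]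

@[simp]
theorem lincomb_cons (a : ℕ) (l : List ℕ) (x : M) (b : List M) :
    lincomb (a :: l) (x :: b) = a • x + lincomb l b := by simp [lincomb]

theorem lincomb_append {l l' : List ℕ} {b b' : List M} (h : l.length = b.length) :
    lincomb (l ++ l') (b ++ b') = lincomb l b + lincomb l' b' := by
  simp [lincomb, List.zipWith_append h]

theorem lincomb_flatMap {ι : Type*} (s : List ι) {l : ι → List ℕ} {b : ι → List M}
    (h : ∀ i, (l i).length = (b i).length) :
    lincomb (s.flatMap l) (s.flatMap b) = (s.map fun i => lincomb (l i) (b i)).sum := by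
  induction s with
  | nil => simp
  | cons i s ih => simp [lincomb_append (h i), ih]

theorem lincomb_mem {S : Type*} [SetLike S M] [AddSubmonoidClass S M] {s : S} (l : List ℕ)
    {b : List M} (h : ∀ x ∈ b, x ∈ s) : lincomb l b ∈ s := by
  induction l generalizing b with
  | nil => exact zero_mem s
  | cons a l ih =>
    obtain _ | ⟨x, b⟩ := b
    · exact zero_mem s
    · rw [lincomb_cons]
      exact add_mem (nsmul_mem (h x List.mem_cons_self) a)
        (ih fun y hy => h y (List.mem_cons_of_mem _ hy))

theorem map_lincomb {N F : Type*} [AddCommMonoid N] [FunLike F M N] [AddMonoidHomClass F M N]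
    (φ : F) (l : List ℕ) (b : List M) : φ (lincomb l b) = lincomb l (b.map φ) := by
  induction l generalizing b with
  | nil => simp
  | cons a l ih => cases b <;> simp [ih]

end

section

variable {p : ℕ} {M : Type*} [AddCommGroup M] [Module (ZMod p) M]

variable (p) in
theorem mod_nsmul (a : ℕ) (x : M) : (a % p) • x = a • x := by
  rw [← Nat.cast_smul_eq_nsmul (ZMod p), ZMod.natCast_mod, Nat.cast_smul_eq_nsmul]

theorem lincomb_rowOp [NeZero p] (c d : ℕ) {v w : List ℕ} (h : v.length = w.length)
    (b : List M) : lincomb (rowOp p c d v w) b = c • lincomb w b - d • lincomb v b := by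
  have hp : ((p - 1 : ℕ) : ZMod p) = -1 := by rw [Nat.cast_pred (NeZero.pos p)]; simp
  induction v generalizing w b with
  | nil => simp [rowOp, List.length_eq_zero_iff.1 h.symm]
  | cons x v ih =>
    obtain _ | ⟨y, w⟩ := w
    · simp at h
    obtain _ | ⟨z, b⟩ := b
    · simp
    rw [rowOp, List.zipWith_cons_cons, lincomb_cons, mod_nsmul, ← rowOp, ih (by simpa using h)]
    simp only [lincomb_cons, ← Nat.cast_smul_eq_nsmul (ZMod p), Nat.cast_add, Nat.cast_mul, hp]
    module

theorem mem_of_spans [Fact p.Prime] (S : Submodule (ZMod p) M) {n : ℕ} {vs : List (List ℕ)}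
    {b : List M} (h : spans p n vs) (hlen : ∀ v ∈ vs, v.length = n) (hb : b.length = n)
    (hS : ∀ v ∈ vs, lincomb v b ∈ S) : ∀ x ∈ b, x ∈ S := by
  induction n generalizing vs b with
  | zero => simp [List.length_eq_zero_iff.1 hb]
  | succ n ih =>
    obtain _ | ⟨x, b⟩ := b
    · simp at hb
    rw [spans] at h
    split at h
    · cases h
    rename_i v hv
    have hmem := List.mem_of_find?_eq_some hv
    have hlen' : ∀ w ∈ vs, w.tail.length = n := fun w hw => by simp [hlen w hw]
    have hcomb : ∀ w ∈ vs, w.headD 0 • x + lincomb w.tail b ∈ S := fun w hw => by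
      obtain _ | ⟨a, w⟩ := w
      · simp
      · simpa using hS _ hw
    have htail : ∀ y ∈ b, y ∈ S := by
      refine ih h ?_ (by simpa using hb) ?_
      · simp only [List.forall_mem_map, rowOp, List.length_zipWith]
        exact fun w hw => by rw [hlen' w hw, hlen' v hmem, min_self]
      · simp only [List.forall_mem_map]
        intro w hw
        rw [lincomb_rowOp _ _ ((hlen' v hmem).trans (hlen' w hw).symm)]
        convert S.sub_mem (S.smul_of_tower_mem (v.headD 0) (hcomb w hw))
          (S.smul_of_tower_mem (w.headD 0) (hcomb v hmem)) using 1
        module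
    have hlin : lincomb v.tail b ∈ S := lincomb_mem v.tail htail
    have hunit : ((v.headD 0 : ℕ) : ZMod p) ≠ 0 := by
      simpa [ZMod.natCast_eq_zero_iff, Nat.dvd_iff_mod_eq_zero] using List.find?_some hv
    refine List.forall_mem_cons.2 ⟨(S.smul_mem_iff hunit).1 ?_, htail⟩
    rw [Nat.cast_smul_eq_nsmul]
    exact (S.add_mem_iff_left hlin).1 (hcomb v hmem)

end

end ListArithmetic

section CoeffPoly

variable {R S : Type*} [CommRing R] [CommRing S] {n : ℕ}

/-- The polynomial of degree less than `n` with prescribed coefficients. -/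
def coeffPoly (c : Fin n → R) : Polynomial R :=
  ((Polynomial.degreeLTEquiv R n).symm c : Polynomial.degreeLT R n)

theorem coeffPoly_eq_sum (c : Fin n → R) :
    coeffPoly c = ∑ k : Fin n, Polynomial.monomial k (c k) := rfl

theorem degree_coeffPoly_lt (c : Fin n → R) : (coeffPoly c).degree < n :=
  Polynomial.mem_degreeLT.1 ((Polynomial.degreeLTEquiv R n).symm c).2

theorem exists_coeffPoly_eq {q : Polynomial R} (hq : q.degree < n) :
    ∃ c : Fin n → R, coeffPoly c = q :=
  ⟨Polynomial.degreeLTEquiv R n ⟨q, Polynomial.mem_degreeLT.2 hq⟩, by simp [coeffPoly]⟩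

theorem map_coeffPoly (φ : R →+* S) (c : Fin n → R) :
    (coeffPoly c).map φ = coeffPoly fun k => φ (c k) := by
  simp [coeffPoly_eq_sum, Polynomial.map_sum]

theorem coeff_coeffPoly (c : Fin n → R) (k : Fin n) : (coeffPoly c).coeff k = c k := by
  simp [coeffPoly_eq_sum, Polynomial.coeff_monomial, Fin.val_inj]

theorem coeffPoly_add (c d : Fin n → R) : coeffPoly (c + d) = coeffPoly c + coeffPoly d := by
  simp [coeffPoly]

theorem coeffPoly_smul (r : R) (c : Fin n → R) : coeffPoly (r • c) = r • coeffPoly c := by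
  simp [coeffPoly]

theorem coeffPoly_inl_add_inr (c d : Fin n → R) :
    (coeffPoly fun k => (TrivSqZeroExt.inl (c k) + TrivSqZeroExt.inr (d k) : DualNumber R)) =
      (coeffPoly c).map (TrivSqZeroExt.inlHom R R) +
        Polynomial.C DualNumber.eps * (coeffPoly d).map (TrivSqZeroExt.inlHom R R) := by
  rw [← Polynomial.smul_eq_C_mul, map_coeffPoly, map_coeffPoly, ← coeffPoly_smul, ← coeffPoly_add]
  congr 1
  ext k <;> simp

end CoeffPoly

section ListPoly

/-- The polynomial with the given list of natural number coefficients, constant term first. -/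
def listPoly (R : Type*) [CommRing R] : List ℕ → Polynomial R
  | [] => 0
  | a :: l => (a : Polynomial R) + Polynomial.X * listPoly R l

/-- Addition of lists of coefficients. -/
def addList : List ℕ → List ℕ → List ℕ
  | [], m => m
  | l, [] => l
  | a :: l, b :: m => (a + b) :: addList l m

/-- Convolution of lists of coefficients. -/
def mulList : List ℕ → List ℕ → List ℕ
  | [], _ => []
  | a :: l, m => addList (m.map (a * ·)) (0 :: mulList l m)

/-- Multiplication by `X` modulo `p` and the monic polynomial of degree `h.length` with nonleading
coefficients `h`. -/
def mulXMod (p : ℕ) (h l : List ℕ) : List ℕ :=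
  rowOp p 1 (l.getLastD 0) h (0 :: l.dropLast)

section

variable (R : Type*) [CommRing R]

@[simp]
theorem listPoly_nil : listPoly R [] = 0 := rfl

@[simp]
theorem listPoly_cons (a : ℕ) (l : List ℕ) :
    listPoly R (a :: l) = (a : Polynomial R) + Polynomial.X * listPoly R l := rfl

theorem listPoly_append (l m : List ℕ) :
    listPoly R (l ++ m) = listPoly R l + Polynomial.X ^ l.length * listPoly R m := by
  induction l with
  | nil => simp
  | cons a l ih => simp only [List.cons_append, listPoly_cons, ih, List.length_cons]; ring

theorem listPoly_replicate_zero (n : ℕ) : listPoly R (List.replicate n 0) = 0 := by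
  induction n with
  | zero => rfl
  | succ n ih => simp [List.replicate_succ, ih]

theorem listPoly_addList (l m : List ℕ) :
    listPoly R (addList l m) = listPoly R l + listPoly R m := by
  induction l, m using addList.induct with
  | case1 m => simp [addList]
  | case2 l h => simp [addList]
  | case3 a l b m ih => simp only [addList, listPoly_cons, ih]; push_cast; ring

theorem listPoly_mulList (l m : List ℕ) :
    listPoly R (mulList l m) = listPoly R l * listPoly R m := by
  have hmap : ∀ a : ℕ, listPoly R (m.map (a * ·)) = a * listPoly R m := fun a => by
    induction m with
    | nil => simp
    | cons b m ih => simp only [List.map_cons, listPoly_cons, ih]; push_cast; ring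
  induction l with
  | nil => simp [mulList]
  | cons a l ih => simp only [mulList, listPoly_addList, hmap, listPoly_cons, ih]; push_cast; ring

theorem lincomb_map_X_pow (l : List ℕ) {n : ℕ} (h : l.length = n) :
    lincomb l ((List.range n).map fun j => (Polynomial.X ^ j : Polynomial R)) = listPoly R l := by
  subst h
  induction l with
  | nil => simp
  | cons a l ih =>
    rw [List.length_cons, List.range_succ_eq_map, listPoly_cons, ← ih, List.map_cons, lincomb_cons,
      ← AddMonoidHom.coe_mulLeft, map_lincomb]
    simp [Function.comp_def, pow_succ']

theorem coeffPoly_getD (l : List ℕ) {n : ℕ} (h : l.length ≤ n) :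
    (coeffPoly fun k : Fin n => ((l.getD k 0 : ℕ) : R)) = listPoly R l := by
  induction l generalizing n with
  | nil => simp [coeffPoly_eq_sum]
  | cons a l ih =>
    obtain _ | n := n
    · simp at h
    rw [coeffPoly_eq_sum, Fin.sum_univ_succ, listPoly_cons, ← ih (by simpa using h),
      coeffPoly_eq_sum, Finset.mul_sum]
    simp [Polynomial.X_mul_monomial]

end

variable {p : ℕ}

theorem listPoly_map_mod (l : List ℕ) :
    listPoly (ZMod p) (l.map (· % p)) = listPoly (ZMod p) l := by
  induction l with
  | nil => rfl
  | cons a l ih =>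
    rw [List.map_cons, listPoly_cons, listPoly_cons, ih, ← map_natCast Polynomial.C,
      ZMod.natCast_mod, map_natCast]

theorem listPoly_rowOp [NeZero p] (c d : ℕ) {v w : List ℕ} (h : v.length = w.length) :
    listPoly (ZMod p) (rowOp p c d v w) =
      c * listPoly (ZMod p) w - d * listPoly (ZMod p) v := by
  rw [← lincomb_map_X_pow _ _ (n := w.length) (by simp [rowOp, h]), lincomb_rowOp _ _ h,
    lincomb_map_X_pow _ _ rfl, lincomb_map_X_pow _ _ h, nsmul_eq_mul, nsmul_eq_mul]

theorem length_mulXMod {h l : List ℕ} (hl : l ≠ []) (hlen : l.length = h.length) :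
    (mulXMod p h l).length = h.length := by
  have := List.length_pos_iff.2 hl
  simp only [mulXMod, rowOp, List.length_zipWith, List.length_cons, List.length_dropLast]
  lia

theorem dvd_X_mul_sub_listPoly_mulXMod [NeZero p] {h l : List ℕ} (hl : l ≠ [])
    (hlen : l.length = h.length) :
    Polynomial.X ^ h.length + listPoly (ZMod p) h ∣
      Polynomial.X * listPoly (ZMod p) l - listPoly (ZMod p) (mulXMod p h l) := by
  obtain ⟨l, a, rfl⟩ := List.eq_nil_or_concat' l |>.resolve_left hl
  refine ⟨(a : Polynomial (ZMod p)), ?_⟩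
  have hlen' : h.length = (0 :: l).length := by simpa using hlen.symm
  simp only [mulXMod, List.getLastD_concat, List.dropLast_concat]
  rw [listPoly_rowOp _ _ hlen', listPoly_append, hlen']
  simp only [listPoly_cons, listPoly_nil, List.length_cons]
  push_cast
  ring

theorem dvd_X_pow_mul_sub_listPoly_iterate_mulXMod [NeZero p] {h l : List ℕ} (hl : l ≠ [])
    (hlen : l.length = h.length) (k : ℕ) :
    ((mulXMod p h)^[k] l).length = h.length ∧ Polynomial.X ^ h.length + listPoly (ZMod p) h ∣
      Polynomial.X ^ k * listPoly (ZMod p) l - listPoly (ZMod p) ((mulXMod p h)^[k] l) := by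
  induction k with
  | zero => simp [hlen]
  | succ k ih =>
    obtain ⟨hlen', hdvd⟩ := ih
    have hne : (mulXMod p h)^[k] l ≠ [] := by
      rw [← List.length_pos_iff, hlen', ← hlen]
      exact List.length_pos_iff.2 hl
    rw [Function.iterate_succ_apply']
    refine ⟨length_mulXMod hne hlen', ?_⟩
    convert (hdvd.mul_left Polynomial.X).add (dvd_X_mul_sub_listPoly_mulXMod hne hlen') using 1
    ring

end ListPoly

section GraphLine

variable {A B : Type*} [CommRing A] [CommRing B]

/-- The equations `(z₂, z₃) = (z₀, z₁) m` of the graph of a `2 × 2` matrix; such graphs are the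
lines of `P^3` disjoint from the line `z₀ = z₁ = 0`. -/
def graphForm (m : Matrix (Fin 2) (Fin 2) A) : (Fin 4 → A) →ₗ[A] Fin 2 → A where
  toFun z k := z (k.addNat 2) - (z 0 * m 0 k + z 1 * m 1 k)
  map_add' z w := by ext k; simp only [Pi.add_apply]; ring
  map_smul' r z := by
    ext k; simp only [Pi.smul_apply, smul_eq_mul, RingHom.id_apply]; ring

theorem graphForm_apply (m : Matrix (Fin 2) (Fin 2) A) (z : Fin 4 → A) (k : Fin 2) :
    graphForm m z k = z (k.addNat 2) - (z 0 * m 0 k + z 1 * m 1 k) := rfl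

theorem map_graphForm (φ : A →+* B) (m : Matrix (Fin 2) (Fin 2) A) (z : Fin 4 → A) (k : Fin 2) :
    φ (graphForm m z k) = graphForm (m.map φ) (fun c => φ (z c)) k := by
  simp [graphForm_apply]

end GraphLine

section SecantCurve

/-- The parameters of the secant problem: six `2 × 2` matrices, whose graphs are six lines, and a
point of affine `4`-space. -/
abbrev SecantParam : Type := (Fin 6 × Fin 2 × Fin 2) ⊕ Fin 4

/-- The unknowns of the secant problem: the nonconstant coefficients of a curve of degree `19`, the
nonleading coefficients of six contact polynomials of degree `12`, and the coefficients of the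
quotients of the equations of the lines on the curve by the contact polynomials. -/
abbrev SecantVar : Type := (Fin 4 × Fin 19) ⊕ (Fin 6 × Fin 12) ⊕ (Fin 6 × Fin 2 × Fin 8)

section

variable {B S : Type*} [CommRing B] [CommRing S]

/-- The matrices among the parameters of the secant problem. -/
def lineMatrix (a : SecantParam → B) (i : Fin 6) : Matrix (Fin 2) (Fin 2) B :=
  .of fun j k => a (.inl (i, j, k))

/-- The curve of a candidate solution of the secant problem. -/
def secantCurve (x : SecantParam ⊕ SecantVar → B) (c : Fin 4) : Polynomial B :=
  .C (x (.inl (.inr c))) + .X * coeffPoly fun k => x (.inr (.inl (c, k)))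

/-- The contact polynomials of a candidate solution of the secant problem. -/
def contactPoly (x : SecantVar → B) (i : Fin 6) : Polynomial B :=
  .X ^ 12 + coeffPoly fun k => x (.inr (.inl (i, k)))

/-- The quotients in a candidate solution of the secant problem. -/
def cofactorPoly (x : SecantVar → B) (i : Fin 6) (k : Fin 2) : Polynomial B :=
  coeffPoly fun n => x (.inr (.inr (i, k, n)))

/-- The differences between the equations of the lines on the curve and the products of the contact
polynomials and the quotients; they vanish for the solutions of the secant problem. -/
def secantDefect (x : SecantParam ⊕ SecantVar → B) (i : Fin 6) (k : Fin 2) : Polynomial B :=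
  graphForm ((lineMatrix (x ∘ .inl) i).map Polynomial.C) (secantCurve x) k -
    contactPoly (x ∘ .inr) i * cofactorPoly (x ∘ .inr) i k

/-- The system of polynomial equations of the secant problem. -/
def secantSystem (j : Fin 6 × Fin 2 × Fin 20) : MvPolynomial (SecantParam ⊕ SecantVar) ℤ :=
  (secantDefect X j.1 j.2.1).coeff j.2.2

theorem map_secantCurve (φ : B →+* S) (x : SecantParam ⊕ SecantVar → B) (c : Fin 4) :
    (secantCurve x c).map φ = secantCurve (φ ∘ x) c := by
  simp [secantCurve, map_coeffPoly]

theorem map_map_lineMatrix (φ : B →+* S) (a : SecantParam → B) (i : Fin 6) :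
    ((lineMatrix a i).map Polynomial.C).map (Polynomial.mapRingHom φ) =
      (lineMatrix (φ ∘ a) i).map Polynomial.C := by
  ext1 j l
  simp [lineMatrix]

theorem map_secantDefect (φ : B →+* S) (x : SecantParam ⊕ SecantVar → B) (i : Fin 6) (k : Fin 2) :
    (secantDefect x i k).map φ = secantDefect (φ ∘ x) i k := by
  rw [← Polynomial.coe_mapRingHom, secantDefect, map_sub, map_graphForm, map_map_lineMatrix]
  simp [contactPoly, cofactorPoly, map_coeffPoly, map_secantCurve, secantDefect,
    Function.comp_def]

theorem evalInt_secantSystem (x : SecantParam ⊕ SecantVar → B) (j : Fin 6 × Fin 2 × Fin 20) :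
    evalInt x (secantSystem j) = (secantDefect x j.1 j.2.1).coeff j.2.2 := by
  have hx : ⇑(evalInt x) ∘ X = x := funext fun i => evalInt_X x i
  rw [secantSystem, ← Polynomial.coeff_map, map_secantDefect, hx]

theorem natDegree_coeffPoly_lt (n : ℕ) [NeZero n] (c : Fin n → B) :
    (coeffPoly c).natDegree < n := by
  by_cases hc : coeffPoly c = 0
  · simpa [hc] using NeZero.pos n
  · exact (Polynomial.natDegree_lt_iff_degree_lt hc).2 (degree_coeffPoly_lt c)

theorem natDegree_secantCurve_le (x : SecantParam ⊕ SecantVar → B) (c : Fin 4) :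
    (secantCurve x c).natDegree ≤ 19 := by
  have := natDegree_coeffPoly_lt 19 fun k => x (.inr (.inl (c, k)))
  unfold secantCurve
  compute_degree
  omega

theorem monic_contactPoly (x : SecantVar → B) (i : Fin 6) : (contactPoly x i).Monic :=
  Polynomial.monic_X_pow_add (degree_coeffPoly_lt _)

theorem natDegree_contactPoly [Nontrivial B] (x : SecantVar → B) (i : Fin 6) :
    (contactPoly x i).natDegree = 12 := by
  have := natDegree_coeffPoly_lt 12 fun k => x (.inr (.inl (i, k)))
  rw [contactPoly, Polynomial.natDegree_add_eq_left_of_natDegree_lt] <;> simp [this]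

theorem natDegree_secantDefect_lt (x : SecantParam ⊕ SecantVar → B) (i : Fin 6) (k : Fin 2) :
    (secantDefect x i k).natDegree < 20 := by
  have hγ := natDegree_secantCurve_le x
  have hh := natDegree_coeffPoly_lt 12 fun k => x (.inr (.inr (.inl (i, k))))
  have he := natDegree_coeffPoly_lt 8 fun n => x (.inr (.inr (.inr (i, k, n))))
  have h0 := hγ 0
  have h1 := hγ 1
  have h2 := hγ (k.addNat 2)
  rw [secantDefect, graphForm_apply, contactPoly, cofactorPoly]
  refine Nat.lt_succ_of_le ?_
  simp only [Matrix.map_apply, Function.comp_apply]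
  compute_degree
  omega

/-- The derivative at a candidate solution of the equation saying that the two equations of a line
on the curve are proportional to the given quotients. -/
def normalForm (m : Matrix (Fin 2) (Fin 2) B) (e : Fin 2 → Polynomial B) :
    (Fin 4 → Polynomial B) →ₗ[Polynomial B] Polynomial B :=
  e 1 • LinearMap.proj 0 ∘ₗ graphForm (m.map .C) - e 0 • LinearMap.proj 1 ∘ₗ graphForm (m.map .C)

theorem normalForm_apply (m : Matrix (Fin 2) (Fin 2) B) (e : Fin 2 → Polynomial B)
    (z : Fin 4 → Polynomial B) : normalForm m e z =
      e 1 * graphForm (m.map .C) z 0 - e 0 * graphForm (m.map .C) z 1 := rfl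

end

end SecantCurve

section SecantTangent

section

variable {k : Type*} [CommRing k]

local notation "ι" => Polynomial.mapRingHom (TrivSqZeroExt.inlHom k k)

theorem secantCurve_tangentPoint (a : SecantParam → k) (x δ : SecantVar → k) :
    secantCurve (tangentPoint a x δ) =
      (fun c => ι (secantCurve (Sum.elim a x) c)) +
        (.C DualNumber.eps : Polynomial (DualNumber k)) •
          fun c => ι (.X * coeffPoly fun n => δ (.inl (c, n))) := by
  ext1 c
  have h := coeffPoly_inl_add_inr (fun n => x (.inl (c, n))) fun n => δ (.inl (c, n))
  simp only [secantCurve, tangentPoint, Sum.elim_inl, Sum.elim_inr, h, Pi.add_apply, Pi.smul_apply,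
    smul_eq_mul, map_add, map_mul, Polynomial.coe_mapRingHom, Polynomial.map_C, Polynomial.map_X,
    TrivSqZeroExt.inlHom_apply]
  ring

theorem contactPoly_tangentPoint (a : SecantParam → k) (x δ : SecantVar → k) (i : Fin 6) :
    contactPoly (tangentPoint a x δ ∘ .inr) i = ι (contactPoly x i) +
      .C DualNumber.eps * ι (coeffPoly fun n => δ (.inr (.inl (i, n)))) := by
  have h := coeffPoly_inl_add_inr (fun n => x (.inr (.inl (i, n)))) fun n => δ (.inr (.inl (i, n)))
  simp only [contactPoly, tangentPoint, Function.comp_apply, Sum.elim_inr, h, map_add, map_pow,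
    Polynomial.coe_mapRingHom, Polynomial.map_X, add_assoc]

theorem cofactorPoly_tangentPoint (a : SecantParam → k) (x δ : SecantVar → k) (i : Fin 6)
    (j : Fin 2) :
    cofactorPoly (tangentPoint a x δ ∘ .inr) i j = ι (cofactorPoly x i j) +
      .C DualNumber.eps * ι (coeffPoly fun n => δ (.inr (.inr (i, j, n)))) :=
  coeffPoly_inl_add_inr (fun n => x (.inr (.inr (i, j, n)))) fun n => δ (.inr (.inr (i, j, n)))

theorem secantDefect_tangentPoint (a : SecantParam → k) (x δ : SecantVar → k) (i : Fin 6)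
    (j : Fin 2) :
    secantDefect (tangentPoint a x δ) i j = ι (secantDefect (Sum.elim a x) i j) +
      .C DualNumber.eps * ι (
        graphForm ((lineMatrix a i).map .C)
          (fun c => .X * coeffPoly fun n => δ (.inl (c, n))) j -
        ((coeffPoly fun n => δ (.inr (.inl (i, n)))) * cofactorPoly x i j +
          contactPoly x i * coeffPoly fun n => δ (.inr (.inr (i, j, n))))) := by
  have hε : (.C DualNumber.eps * .C DualNumber.eps : Polynomial (DualNumber k)) = 0 := by
    rw [← Polynomial.C_mul, DualNumber.eps_mul_eps, Polynomial.C_0]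
  have hM : (lineMatrix (tangentPoint a x δ ∘ .inl) i).map Polynomial.C =
      ((lineMatrix a i).map .C).map ι :=
    (map_map_lineMatrix (TrivSqZeroExt.inlHom k k) a i).symm
  rw [secantDefect, hM, secantCurve_tangentPoint, contactPoly_tangentPoint,
    cofactorPoly_tangentPoint, map_add, map_smul, Pi.add_apply, Pi.smul_apply, smul_eq_mul,
    ← map_graphForm, ← map_graphForm, secantDefect]
  simp only [map_sub, map_add, map_mul, Sum.elim_comp_inl, Sum.elim_comp_inr]
  linear_combination (- ι (coeffPoly fun n => δ (.inr (.inl (i, n)))) *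
    ι (coeffPoly fun n => δ (.inr (.inr (i, j, n))))) * hε

theorem coeff_C_eps_mul_mapRingHom (q : Polynomial k) (n : ℕ) :
    (.C DualNumber.eps * ι q : Polynomial (DualNumber k)).coeff n =
      TrivSqZeroExt.inr (q.coeff n) := by
  rw [Polynomial.coeff_C_mul, Polynomial.coe_mapRingHom, Polynomial.coeff_map]
  ext <;> simp

theorem exists_degree_lt_dvd_sub_mul [Nontrivial k] {h : Polynomial k} (hh : h.Monic)
    {e s g : Fin 2 → Polynomial k} (hg : h ∣ e 1 * g 0 - e 0 * g 1 - 1)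
    (hs : h ∣ e 1 * s 0 - e 0 * s 1) :
    ∃ η : Polynomial k, η.degree < h.degree ∧ ∀ j, h ∣ s j - η * e j := by
  refine ⟨(g 0 * s 1 - g 1 * s 0) %ₘ h, Polynomial.degree_modByMonic_lt _ hh, fun j => ?_⟩
  obtain ⟨q, hq⟩ := hg
  obtain ⟨r, hr⟩ := hs
  have hdiv := Polynomial.modByMonic_add_div (g 0 * s 1 - g 1 * s 0) h
  set η := (g 0 * s 1 - g 1 * s 0) %ₘ h
  refine ⟨((g 0 * s 1 - g 1 * s 0) /ₘ h) * e j + g j * r - q * s j, ?_⟩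
  fin_cases j
  · dsimp
    linear_combination -e 0 * hdiv - s 0 * hq + g 0 * hr
  · dsimp
    linear_combination -e 1 * hdiv - s 1 * hq + g 1 * hr

theorem exists_coeffPoly_eq_of_natDegree_mul_lt {h q : Polynomial k} (hh : h.Monic) {n : ℕ}
    [NeZero n] (hq : (h * q).natDegree < h.natDegree + n) : ∃ c : Fin n → k, coeffPoly c = q := by
  refine exists_coeffPoly_eq ?_
  by_cases h0 : q = 0
  · simp [h0]
  · rw [hh.natDegree_mul' h0] at hq
    exact (Polynomial.natDegree_lt_iff_degree_lt h0).1 (by omega)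

theorem natDegree_graphForm_X_mul_coeffPoly_lt (m : Matrix (Fin 2) (Fin 2) k)
    (d : Fin 4 → Fin 19 → k) (j : Fin 2) :
    (graphForm (m.map .C) (fun c => .X * coeffPoly (d c)) j).natDegree < 20 := by
  have hd := fun c => natDegree_coeffPoly_lt 19 (d c)
  have h0 := hd 0
  have h1 := hd 1
  have h2 := hd (j.addNat 2)
  rw [graphForm_apply]
  refine Nat.lt_succ_of_le ?_
  simp only [Matrix.map_apply]
  compute_degree
  omega

theorem exists_graphForm_sub_eq [Nontrivial k] {m : Matrix (Fin 2) (Fin 2) k} {h : Polynomial k}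
    {e : Fin 2 → Polynomial k} {g d : Fin 4 → Fin 19 → k} {s : Fin 2 → Fin 20 → k}
    (hh : h.Monic) (hdeg : h.natDegree = 12) (he : ∀ j, (e j).natDegree < 8)
    (hg : h ∣ normalForm m e (fun c => .X * coeffPoly (g c)) - 1)
    (hd : h ∣ normalForm m e (fun c => .X * coeffPoly (d c)) -
      (e 1 * coeffPoly (s 0) - e 0 * coeffPoly (s 1))) :
    ∃ (η : Fin 12 → k) (ζ : Fin 2 → Fin 8 → k), ∀ j,
      graphForm (m.map .C) (fun c => .X * coeffPoly (d c)) j -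
        (coeffPoly η * e j + h * coeffPoly (ζ j)) = coeffPoly (s j) := by
  have hs : h ∣ e 1 * (graphForm (m.map .C) (fun c => .X * coeffPoly (d c)) 0 - coeffPoly (s 0)) -
      e 0 * (graphForm (m.map .C) (fun c => .X * coeffPoly (d c)) 1 - coeffPoly (s 1)) := by
    rw [normalForm_apply] at hd
    convert hd using 1
    ring
  obtain ⟨η, hη, hdvd⟩ := exists_degree_lt_dvd_sub_mul hh hg
    (s := fun j => graphForm (m.map .C) (fun c => .X * coeffPoly (d c)) j - coeffPoly (s j)) hs
  rw [Polynomial.degree_eq_natDegree hh.ne_zero, hdeg] at hη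
  obtain ⟨η, rfl⟩ := exists_coeffPoly_eq hη
  have hζ : ∀ j, ∃ ζ : Fin 8 → k, graphForm (m.map .C) (fun c => .X * coeffPoly (d c)) j -
      coeffPoly (s j) - coeffPoly η * e j = h * coeffPoly ζ := by
    intro j
    obtain ⟨q, hq⟩ := hdvd j
    have hlt : (h * q).natDegree < h.natDegree + 8 := by
      have hG := natDegree_graphForm_X_mul_coeffPoly_lt m d j
      have hs := natDegree_coeffPoly_lt 20 (s j)
      have hη := natDegree_coeffPoly_lt 12 η
      have hej := he j
      rw [← hq, hdeg, Nat.lt_succ_iff]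
      compute_degree
      omega
    obtain ⟨c, rfl⟩ := exists_coeffPoly_eq_of_natDegree_mul_lt hh hlt
    exact ⟨c, hq⟩
  choose ζ hζ using hζ
  exact ⟨η, ζ, fun j => by linear_combination hζ j⟩

/-- The right-hand sides for which the linearized secant problem is solvable modulo the contact
polynomials. -/
def tangentImage (a : SecantParam → k) (x : SecantVar → k) :
    Submodule k (Fin 6 → Polynomial k) where
  carrier := {t | ∃ d : Fin 4 → Fin 19 → k, ∀ i, contactPoly x i ∣
    normalForm (lineMatrix a i) (cofactorPoly x i) (fun c => .X * coeffPoly (d c)) - t i}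
  add_mem' := by
    rintro t u ⟨d, hd⟩ ⟨d', hd'⟩
    refine ⟨d + d', fun i => ?_⟩
    convert (hd i).add (hd' i) using 1
    simp only [normalForm_apply, graphForm_apply, Pi.add_apply, coeffPoly_add]
    ring
  zero_mem' := ⟨0, fun i => by
    simp [normalForm_apply, graphForm_apply, coeffPoly_eq_sum]⟩
  smul_mem' := by
    rintro r t ⟨d, hd⟩
    refine ⟨r • d, fun i => ?_⟩
    convert (hd i).mul_left (.C r) using 1
    simp only [normalForm_apply, graphForm_apply, Pi.smul_apply, coeffPoly_smul,
      Polynomial.smul_eq_C_mul]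
    ring

theorem tangentImage_eq_top [Nontrivial k] {a : SecantParam → k} {x : SecantVar → k}
    (h : ∀ (i : Fin 6) (j : Fin 12), Pi.single i (.X ^ (j : ℕ)) ∈ tangentImage a x) :
    tangentImage a x = ⊤ := by
  refine eq_top_iff.2 fun t _ => ?_
  have hmod : ∀ i, ∃ c : Fin 12 → k, coeffPoly c = t i %ₘ contactPoly x i := fun i => by
    have hlt := Polynomial.degree_modByMonic_lt (t i) (monic_contactPoly x i)
    rw [Polynomial.degree_eq_natDegree (monic_contactPoly x i).ne_zero,
      natDegree_contactPoly] at hlt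
    exact exists_coeffPoly_eq hlt
  choose c hc using hmod
  have hsum : (fun i => coeffPoly (c i)) =
      ∑ i, ∑ j : Fin 12, c i j • Pi.single i (.X ^ (j : ℕ) : Polynomial k) := by
    ext1 i
    simp [Finset.sum_apply, Pi.single_apply, coeffPoly_eq_sum, Polynomial.smul_X_eq_monomial]
  have hmem : (fun i => coeffPoly (c i)) ∈ tangentImage a x := by
    rw [hsum]
    exact sum_mem fun i _ => sum_mem fun j _ => Submodule.smul_mem _ _ (h i j)
  obtain ⟨d, hd⟩ := hmem
  refine ⟨d, fun i => ?_⟩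
  have hdiv : contactPoly x i ∣ t i - coeffPoly (c i) := by
    rw [hc, Polynomial.modByMonic_eq_sub_mul_div, sub_sub_cancel]
    exact dvd_mul_right _ _
  simpa using (hd i).sub hdiv

theorem isSmoothZero_secantSystem [Nontrivial k] {a : SecantParam → k} {x : SecantVar → k}
    (h₀ : ∀ i j, secantDefect (Sum.elim a x) i j = 0) (htan : tangentImage a x = ⊤) :
    IsSmoothZero secantSystem a x := by
  obtain ⟨g, hg⟩ : 1 ∈ tangentImage a x := htan ▸ trivial
  intro r
  obtain ⟨d, hd⟩ : (fun i => cofactorPoly x i 1 * coeffPoly (fun n => r (i, 0, n)) -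
      cofactorPoly x i 0 * coeffPoly (fun n => r (i, 1, n))) ∈ tangentImage a x := htan ▸ trivial
  have hsol := fun i => exists_graphForm_sub_eq (s := fun j n => r (i, j, n))
    (monic_contactPoly x i) (natDegree_contactPoly x i) (fun j => natDegree_coeffPoly_lt 8 _)
    (hg i) (hd i)
  choose η ζ hηζ using hsol
  refine ⟨Sum.elim (fun c => d c.1 c.2)
    (Sum.elim (fun c => η c.1 c.2) fun c => ζ c.1 c.2.1 c.2.2), fun ⟨i, j, n⟩ => ?_⟩
  rw [evalInt_secantSystem, secantDefect_tangentPoint, h₀, map_zero, zero_add,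
    coeff_C_eps_mul_mapRingHom]
  exact congrArg _ ((congrArg (Polynomial.coeff · n) (hηζ i j)).trans (coeff_coeffPoly _ n))

end

end SecantTangent

section Reference

local instance : Fact (Nat.Prime 31) := ⟨by norm_num⟩

local notation "𝔽" => ZMod 31

/-- The reference lines over `ℤ/31`. -/
def refLine : Fin 6 → Matrix (Fin 2) (Fin 2) ℕ :=
  ![!![28, 9; 2, 10], !![9, 20; 2, 1], !![18, 14; 15, 26], !![3, 27; 22, 26],
    !![9, 9; 19, 15], !![7, 23; 8, 8]]

/-- The coefficients of the reference curve over `ℤ/31`. -/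
def refCurve : Fin 4 → List ℕ :=
  ![[2, 7, 26, 3, 16, 21, 20, 3, 14, 22, 6, 23, 19, 28, 13, 20, 21, 0, 6, 1],
    [14, 10, 24, 18, 19, 29, 2, 2, 2, 30, 22, 2, 27, 29, 17, 22, 19, 28, 30, 23],
    [9, 21, 14, 16, 8, 11, 30, 6, 4, 6, 2, 21, 12, 23, 27, 9, 28, 30, 3, 21],
    [27, 20, 2, 9, 14, 16, 28, 23, 6, 23, 9, 0, 4, 16, 10, 28, 20, 14, 23, 10]]

/-- The nonleading coefficients of the reference contact polynomials, which are monic. -/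
def refContact : Fin 6 → List ℕ :=
  ![[13, 6, 29, 13, 19, 17, 20, 17, 17, 4, 16, 20],
    [14, 6, 24, 25, 4, 21, 21, 17, 0, 22, 23, 23],
    [13, 28, 13, 13, 26, 26, 25, 29, 22, 16, 4, 6],
    [19, 30, 9, 18, 9, 12, 21, 15, 22, 19, 7, 2],
    [3, 2, 23, 28, 6, 14, 21, 24, 7, 27, 3, 13],
    [13, 12, 17, 22, 27, 12, 25, 14, 15, 4, 27, 24]]

/-- The quotients of the equations of the reference lines on the reference curve by the contact
polynomials. -/
def refCofactor : Fin 6 → Fin 2 → List ℕ :=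
  ![![[30, 26, 27, 6, 14, 25, 29, 9],
      [9, 23, 26, 15, 15, 10, 2, 19]],
    ![[4, 16, 7, 10, 8, 17, 20, 28],
      [18, 14, 13, 2, 1, 4, 12, 29]],
    ![[8, 18, 17, 21, 1, 25, 9, 30],
      [22, 22, 5, 14, 14, 10, 12, 18]],
    ![[28, 16, 7, 29, 24, 27, 22, 8],
      [30, 10, 8, 9, 18, 24, 1, 5]],
    ![[22, 1, 29, 22, 9, 13, 6, 9],
      [26, 1, 16, 15, 19, 17, 23, 28]],
    ![[22, 0, 27, 17, 10, 3, 19, 16],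
      [9, 20, 26, 0, 20, 8, 2, 20]]]

/-- The Bézout coefficients of the first two coordinates of the reference curve. -/
def refBezout : Fin 2 → List ℕ :=
  ![[11, 24, 10, 27, 21, 22, 27, 7, 10, 24, 26, 21, 11, 29, 7, 9, 8, 0, 20],
    [14, 1, 30, 16, 8, 25, 15, 20, 15, 17, 21, 6, 26, 30, 17, 2, 13, 5, 18]]

/-- The coefficients of the coordinates in `normalForm` at the reference curve. -/
def refMultiplier (i : Fin 6) : Fin 4 → List ℕ :=
  let m := refLine i
  let e := refCofactor i
  ![rowOp 31 (m 0 1) (m 0 0) (e 1) (e 0), rowOp 31 (m 1 1) (m 1 0) (e 1) (e 0), e 1,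
    rowOp 31 0 1 (e 0) (e 0)]

/-- The image of the tangent direction `X ^ (k + 1)` in the `c`-th coordinate of the reference
curve, reduced modulo the six contact polynomials. -/
def refTangent (c : Fin 4) (k : Fin 19) : List ℕ :=
  (List.finRange 6).flatMap fun i =>
    (mulXMod 31 (refContact i))^[k + 1] (refMultiplier i c ++ [0, 0, 0, 0])

/-- The matrix of the linearized secant problem at the reference curve. -/
def refTangents : List (List ℕ) :=
  (List.finRange 4).flatMap fun c => (List.finRange 19).map fun k => refTangent c k

theorem spans_refTangents : spans 31 72 refTangents := by decide +kernel

/-- The parameters of the reference curve. -/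
def refParam : SecantParam → 𝔽 :=
  Sum.elim (fun p => refLine p.1 p.2.1 p.2.2) fun c => (refCurve c).headD 0

/-- The reference solution of the secant problem. -/
def refVar : SecantVar → 𝔽 :=
  Sum.elim (fun p => (refCurve p.1).tail.getD p.2 0) <|
    Sum.elim (fun p => (refContact p.1).getD p.2 0) fun p => (refCofactor p.1 p.2.1).getD p.2.2 0

theorem lineMatrix_refParam (i : Fin 6) :
    lineMatrix refParam i = (refLine i).map (Nat.cast : ℕ → 𝔽) := rfl

theorem secantCurve_ref (c : Fin 4) :
    secantCurve (Sum.elim refParam refVar) c = listPoly 𝔽 (refCurve c) := by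
  have hc : refCurve c = (refCurve c).headD 0 :: (refCurve c).tail := by decide +revert
  have h := coeffPoly_getD 𝔽 (refCurve c).tail (n := 19) (by decide +revert)
  rw [hc, listPoly_cons, ← h]
  simp [secantCurve, refParam, refVar]

theorem contactPoly_refVar (i : Fin 6) :
    contactPoly refVar i = .X ^ 12 + listPoly 𝔽 (refContact i) := by
  rw [← coeffPoly_getD 𝔽 (refContact i) (n := 12) (by decide +revert)]
  rfl

theorem cofactorPoly_refVar (i : Fin 6) (k : Fin 2) :
    cofactorPoly refVar i k = listPoly 𝔽 (refCofactor i k) :=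
  coeffPoly_getD 𝔽 (refCofactor i k) (by decide +revert)

theorem secantDefect_ref (i : Fin 6) (k : Fin 2) :
    secantDefect (Sum.elim refParam refVar) i k = 0 := by
  have hcheck : rowOp 31 1 (refLine i 1 k) (refCurve 1)
      (rowOp 31 1 (refLine i 0 k) (refCurve 0) (refCurve (k.addNat 2))) =
      (mulList (refContact i ++ [1]) (refCofactor i k)).map (· % 31) := by
    decide +revert +kernel
  have hlen : ∀ c, (refCurve c).length = 20 := by decide
  have hcontact : (refContact i).length = 12 := by decide +revert
  have hpoly := congrArg (listPoly 𝔽) hcheck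
  rw [listPoly_map_mod, listPoly_mulList, listPoly_append, listPoly_rowOp, listPoly_rowOp,
    hcontact] at hpoly
  · rw [secantDefect, Sum.elim_comp_inl, Sum.elim_comp_inr, contactPoly_refVar,
      cofactorPoly_refVar, lineMatrix_refParam, graphForm_apply]
    simp only [secantCurve_ref, Matrix.map_apply, map_natCast]
    simp at hpoly
    linear_combination hpoly
  all_goals simp [rowOp, hlen]

theorem isCoprime_refCurve : IsCoprime (listPoly 𝔽 (refCurve 0)) (listPoly 𝔽 (refCurve 1)) := by
  have hcheck : (addList (mulList (refBezout 0) (refCurve 0))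
      (mulList (refBezout 1) (refCurve 1))).map (· % 31) = 1 :: List.replicate 37 0 := by
    decide +kernel
  refine ⟨listPoly 𝔽 (refBezout 0), listPoly 𝔽 (refBezout 1), ?_⟩
  simpa [listPoly_map_mod, listPoly_addList, listPoly_mulList, listPoly_replicate_zero] using
    congrArg (listPoly 𝔽) hcheck

theorem normalForm_ref (i : Fin 6) (c : Fin 4) (q : Polynomial 𝔽) :
    normalForm (lineMatrix refParam i) (cofactorPoly refVar i) (Pi.single c q) =
      q * listPoly 𝔽 (refMultiplier i c) := by
  have hlen : ∀ k, (refCofactor i k).length = 8 := by decide +revert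
  fin_cases c <;>
    simp [normalForm_apply, graphForm_apply, cofactorPoly_refVar, refMultiplier, listPoly_rowOp,
      hlen, lineMatrix_refParam] <;> ring

end Reference

section SecantExistence

local instance : Fact (Nat.Prime 31) := ⟨by norm_num⟩

local notation "𝔽" => ZMod 31

/-- The monomials spanning the residues modulo the six reference contact polynomials, ordered like
the entries of `refTangent`. -/
def refBasis : List (Fin 6 → Polynomial 𝔽) :=
  (List.finRange 6).flatMap fun i => (List.range 12).map fun j => Pi.single i (.X ^ j)

theorem dvd_X_pow_mul_refMultiplier_sub (i : Fin 6) (c : Fin 4) (k : ℕ) :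
    ((mulXMod 31 (refContact i))^[k] (refMultiplier i c ++ [0, 0, 0, 0])).length = 12 ∧
      contactPoly refVar i ∣ .X ^ k * listPoly 𝔽 (refMultiplier i c) -
        listPoly 𝔽 ((mulXMod 31 (refContact i))^[k] (refMultiplier i c ++ [0, 0, 0, 0])) := by
  have hlen : (refMultiplier i c ++ [0, 0, 0, 0]).length = (refContact i).length := by
    decide +revert
  have h12 : (refContact i).length = 12 := by decide +revert
  have h := dvd_X_pow_mul_sub_listPoly_iterate_mulXMod (p := 31) (by simp) hlen k
  simpa [h12, contactPoly_refVar, listPoly_append] using h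

theorem length_refTangent (c : Fin 4) (k : Fin 19) : (refTangent c k).length = 72 := by
  simp only [refTangent, List.length_flatMap, (dvd_X_pow_mul_refMultiplier_sub _ c _).1]
  decide

theorem lincomb_refTangent (c : Fin 4) (k : Fin 19) :
    lincomb (refTangent c k) refBasis = fun i => listPoly 𝔽
      ((mulXMod 31 (refContact i))^[k + 1] (refMultiplier i c ++ [0, 0, 0, 0])) := by
  have hlen := fun i => (dvd_X_pow_mul_refMultiplier_sub i c (k + 1)).1
  rw [refTangent, refBasis, lincomb_flatMap _ (by simpa using hlen), ← Fin.sum_univ_def]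
  have hsingle : ∀ i : Fin 6, ((List.range 12).map fun j =>
      (Pi.single i (.X ^ j) : Fin 6 → Polynomial 𝔽)) =
      ((List.range 12).map (.X ^ · : ℕ → Polynomial 𝔽)).map
        (AddMonoidHom.single (fun _ => Polynomial 𝔽) i) := by simp
  simp only [hsingle, ← map_lincomb, lincomb_map_X_pow _ _ (hlen _), AddMonoidHom.single_apply,
    Finset.univ_sum_single]

theorem lincomb_refTangent_mem (c : Fin 4) (k : Fin 19) :
    lincomb (refTangent c k) refBasis ∈ tangentImage refParam refVar := by
  refine ⟨Pi.single c (Pi.single k 1), fun i => ?_⟩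
  have hk : coeffPoly (Pi.single k 1 : Fin 19 → 𝔽) = .X ^ (k : ℕ) := by
    simp [coeffPoly_eq_sum, Pi.single_apply, Polynomial.X_pow_eq_monomial, apply_ite]
  have hz : (fun c' => .X * coeffPoly ((Pi.single c (Pi.single k 1) : Fin 4 → Fin 19 → 𝔽) c')) =
      (Pi.single c (.X ^ (k + 1 : ℕ)) : Fin 4 → Polynomial 𝔽) := by
    ext1 c'
    obtain rfl | hc := eq_or_ne c' c
    · simp [hk, pow_succ']
    · simp [hc, coeffPoly_eq_sum]
  rw [lincomb_refTangent, hz, normalForm_ref]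
  exact (dvd_X_pow_mul_refMultiplier_sub i c (k + 1)).2

theorem tangentImage_ref : tangentImage refParam refVar = ⊤ := by
  refine tangentImage_eq_top fun i j => mem_of_spans (p := 31) _ spans_refTangents ?_ ?_ ?_ _ ?_
    (b := refBasis)
  · simp only [refTangents, List.mem_flatMap, List.mem_map]
    rintro _ ⟨c, -, k, -, rfl⟩
    exact length_refTangent c k
  · simp [refBasis]
  · simp only [refTangents, List.mem_flatMap, List.mem_map]
    rintro _ ⟨c, -, k, -, rfl⟩
    exact lincomb_refTangent_mem c k
  · simp only [refBasis, List.mem_flatMap, List.mem_map]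
    exact ⟨i, List.mem_finRange i, j, by simp, rfl⟩

/-- `γ` parametrizes a rational curve of degree at most `19` that meets the graph of every matrix
`m i` in the divisor of degree `12` cut out by `h i`. -/
structure IsSecantCurve {K : Type*} [Field K] (m : Fin 6 → Matrix (Fin 2) (Fin 2) K)
    (γ : Fin 4 → Polynomial K) (h : Fin 6 → Polynomial K) : Prop where
  natDegree_le (c) : (γ c).natDegree ≤ 19
  isCoprime : IsCoprime (γ 0) (γ 1)
  monic (i) : (h i).Monic
  natDegree_eq (i) : (h i).natDegree = 12
  dvd (i k) : h i ∣ graphForm ((m i).map .C) γ k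

/-- The resultant of the first two coordinates of the curve. -/
def secantResultant {B : Type*} [CommRing B] (x : SecantParam ⊕ SecantVar → B) : B :=
  (secantCurve x 0).resultant (secantCurve x 1) 19 19

theorem map_secantResultant {B S : Type*} [CommRing B] [CommRing S] (φ : B →+* S)
    (x : SecantParam ⊕ SecantVar → B) : φ (secantResultant x) = secantResultant (φ ∘ x) := by
  rw [secantResultant, ← Polynomial.resultant_map_map, map_secantCurve, map_secantCurve,
    secantResultant]

theorem secantResultant_ref_ne_zero : secantResultant (Sum.elim refParam refVar) ≠ 0 := by
  have hlen : ∀ c, (refCurve c).length = 20 := by decide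
  have hlead : ∀ c, ((refCurve c).getD 19 0 : 𝔽) ≠ 0 := by decide
  have hdeg : ∀ c, (listPoly 𝔽 (refCurve c)).natDegree = 19 := fun c => by
    rw [← coeffPoly_getD 𝔽 (refCurve c) (hlen c).le]
    refine Polynomial.natDegree_eq_of_le_of_coeff_ne_zero
      (Nat.le_of_lt_succ (natDegree_coeffPoly_lt 20 _)) ?_
    exact (coeff_coeffPoly _ (19 : Fin 20)).trans_ne (hlead c)
  have hne := Polynomial.resultant_ne_zero _ _ isCoprime_refCurve
  rwa [hdeg, hdeg, ← secantCurve_ref, ← secantCurve_ref] at hne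

theorem evalInt_secantResultant {B : Type*} [CommRing B] (x : SecantParam ⊕ SecantVar → B) :
    evalInt x (secantResultant X) = secantResultant x := by
  rw [map_secantResultant]
  exact congrArg _ (funext fun i => evalInt_X x i)

theorem isSecantCurve_of_secantDefect_eq_zero {K : Type*} [Field K] {a : SecantParam → K}
    {x : SecantVar → K} (h : ∀ i k, secantDefect (Sum.elim a x) i k = 0)
    (hres : secantResultant (Sum.elim a x) ≠ 0) :
    IsSecantCurve (lineMatrix a) (secantCurve (Sum.elim a x)) (contactPoly x) where
  natDegree_le := natDegree_secantCurve_le _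
  isCoprime := by
    have hγ := natDegree_secantCurve_le (Sum.elim a x)
    obtain ⟨p, q, -, -, hpq⟩ :=
      Polynomial.exists_mul_add_mul_eq_C_resultant _ _ (hγ 0) (hγ 1) (by norm_num)
    set r := secantResultant (Sum.elim a x) with hr
    have hC : (.C r⁻¹ * .C r : Polynomial K) = 1 := by
      rw [← Polynomial.C_mul, inv_mul_cancel₀ hres, Polynomial.C_1]
    rw [← secantResultant, ← hr] at hpq
    exact ⟨.C r⁻¹ * p, .C r⁻¹ * q, by linear_combination hC + .C r⁻¹ * hpq⟩
  monic := monic_contactPoly x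
  natDegree_eq := natDegree_contactPoly x
  dvd i k := ⟨_, sub_eq_zero.1 (h i k)⟩

theorem exists_ne_zero_forall_exists_isSecantCurve (K : Type*) [Field K] [IsAlgClosed K] :
    ∃ P : MvPolynomial SecantParam ℤ, P ≠ 0 ∧ ∀ a : SecantParam → K, evalInt a P ≠ 0 →
      ∃ γ h, IsSecantCurve (lineMatrix a) γ h ∧ ∀ c, (γ c).coeff 0 = a (.inr c) := by
  have hsmooth := isSmoothZero_secantSystem secantDefect_ref tangentImage_ref
  obtain ⟨P, hP, hsol⟩ := hsmooth.exists_ne_zero_forall_exists_evalInt_eq_zero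
    (g := secantResultant X) (by rw [evalInt_secantResultant]; exact secantResultant_ref_ne_zero) K
  refine ⟨P, hP, fun a ha => ?_⟩
  obtain ⟨x, hx, hres⟩ := hsol a ha
  rw [evalInt_secantResultant] at hres
  have hdef (i k) : secantDefect (Sum.elim a x) i k = 0 := by
    ext n
    obtain hn | hn := lt_or_ge n 20
    · exact (evalInt_secantSystem (Sum.elim a x) (i, k, ⟨n, hn⟩)).symm.trans (hx _)
    · exact Polynomial.coeff_eq_zero_of_natDegree_lt ((natDegree_secantDefect_lt _ i k).trans_le hn)
  exact ⟨_, _, isSecantCurve_of_secantDefect_eq_zero hdef hres, fun c => by simp [secantCurve]⟩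

end SecantExistence

section LowerBound

theorem eq_zero_of_graphForm_eq_zero {A : Type*} [CommRing A] [IsDomain A]
    {m m' : Matrix (Fin 2) (Fin 2) A} (hdet : (m - m').det ≠ 0) {z : Fin 4 → A}
    (hz : graphForm m z = 0) (hz' : graphForm m' z = 0) : z = 0 := by
  have h (k : Fin 2) := congrFun hz k
  have h' (k : Fin 2) := congrFun hz' k
  simp only [graphForm_apply, Pi.zero_apply] at h h'
  have hx : ![z 0, z 1] = 0 := by
    refine Matrix.eq_zero_of_vecMul_eq_zero hdet (funext fun k => ?_)
    simp only [Matrix.vecMul, dotProduct, Fin.sum_univ_two, Matrix.sub_apply, Matrix.cons_val_zero,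
      Matrix.cons_val_one, Pi.zero_apply]
    linear_combination h' k - h k
  have h0 : z 0 = 0 := congrFun hx 0
  have h1 : z 1 = 0 := congrFun hx 1
  ext c
  fin_cases c
  · exact h0
  · exact h1
  · simpa [h0, h1] using h 0
  · simpa [h0, h1] using h 1

theorem graphForm_map_eq_zero {A B : Type*} [CommRing A] [CommRing B] (φ : A →+* B)
    {m : Matrix (Fin 2) (Fin 2) A} {m' : Matrix (Fin 2) (Fin 2) B} (hm : m.map φ = m')
    {z : Fin 4 → A} (hz : ∀ k, φ (graphForm m z k) = 0) : graphForm m' (fun c => φ (z c)) = 0 :=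
  funext fun k => by rw [← hm, ← map_graphForm, hz, Pi.zero_apply]

/-- The line of `P^3` which is the graph of a `2 × 2` matrix. -/
def graphLine (m : Matrix (Fin 2) (Fin 2) ℂ) : Submodule ℂ C4 := LinearMap.ker (graphForm m)

theorem mem_graphLine {m : Matrix (Fin 2) (Fin 2) ℂ} {z : C4} :
    z ∈ graphLine m ↔ graphForm m z = 0 := LinearMap.mem_ker

theorem aeval_eq_zero_of_mem_lineIdeal {B : Type*} [CommRing B] [Algebra ℂ B]
    {m : Matrix (Fin 2) (Fin 2) ℂ} {G : R3} (hG : G ∈ lineIdeal (graphLine m)) {z : Fin 4 → B}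
    (hz : graphForm (m.map (algebraMap ℂ B)) z = 0) : aeval z G = 0 := by
  let p : Fin 4 → MvPolynomial (Fin 2) ℂ := ![X 0, X 1, X 0 * C (m 0 0) + X 1 * C (m 1 0),
    X 0 * C (m 0 1) + X 1 * C (m 1 1)]
  have hp : graphForm (m.map C) p = 0 := by
    ext1 k
    fin_cases k <;> simp [graphForm_apply, p]
  have hpG : aeval p G = 0 := MvPolynomial.funext fun x => by
    have hm : (m.map C).map (eval x) = m := by ext; simp
    have hx : (fun c => eval x (p c)) ∈ graphLine m :=
      mem_graphLine.2 (graphForm_map_eq_zero (eval x) hm fun k => by rw [hp]; exact map_zero _)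
    rw [map_zero, ← hG _ hx]
    simp only [← coe_aeval_eq_eval, comp_aeval_apply, RingHom.coe_coe]
  have hzp : z = fun c => aeval ![z 0, z 1] (p c) := by
    have h (k : Fin 2) := congrFun hz k
    simp only [graphForm_apply, Pi.zero_apply, Matrix.map_apply, sub_eq_zero] at h
    ext c
    fin_cases c
    · simp [p]
    · simp [p]
    · simpa [p] using h 0
    · simpa [p] using h 1
  rw [hzp, ← comp_aeval, AlgHom.comp_apply, hpG, map_zero]

theorem dvd_aeval_of_mem_lineIdeal {m : Matrix (Fin 2) (Fin 2) ℂ} {G : R3}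
    (hG : G ∈ lineIdeal (graphLine m)) {γ : Fin 4 → Polynomial ℂ} {h : Polynomial ℂ}
    (hdvd : ∀ k, h ∣ graphForm (m.map .C) γ k) : h ∣ aeval γ G := by
  let π := Ideal.Quotient.mkₐ ℂ (Ideal.span {h})
  have hπ (f : Polynomial ℂ) : π f = 0 ↔ h ∣ f := by
    rw [Ideal.Quotient.mkₐ_eq_mk, Ideal.Quotient.eq_zero_iff_mem, Ideal.mem_span_singleton]
  rw [← hπ, ← AlgHom.comp_apply, comp_aeval]
  exact aeval_eq_zero_of_mem_lineIdeal hG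
    (graphForm_map_eq_zero π.toRingHom rfl fun k => (hπ _).2 (hdvd k))

theorem IsSecantCurve.isCoprime_contact {K : Type*} [Field K] [IsAlgClosed K]
    {m : Fin 6 → Matrix (Fin 2) (Fin 2) K} {γ : Fin 4 → Polynomial K} {h : Fin 6 → Polynomial K}
    (H : IsSecantCurve m γ h) {i j : Fin 6} (hdet : (m i - m j).det ≠ 0) :
    IsCoprime (h i) (h j) := by
  refine (Polynomial.isCoprime_iff_aeval_ne_zero_of_isAlgClosed K K _ _).2 fun t => ?_
  by_contra! ⟨hi, hj⟩
  have mem_line {l : Fin 6} (hl : Polynomial.aeval t (h l) = 0) :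
      graphForm (m l) (fun c => (γ c).eval t) = 0 := by
    refine graphForm_map_eq_zero (Polynomial.evalRingHom t) (m := (m l).map .C) ?_ fun k => ?_
    · ext; simp
    · rw [Polynomial.coe_aeval_eq_eval] at hl
      exact Polynomial.eval_eq_zero_of_dvd_of_eval_eq_zero (H.dvd l k) hl
  have hγ := congrFun (eq_zero_of_graphForm_eq_zero hdet (mem_line hi) (mem_line hj))
  obtain ⟨p, q, hpq⟩ := H.isCoprime
  have h0 : (γ 0).eval t = 0 := hγ 0
  have h1 : (γ 1).eval t = 0 := hγ 1
  simpa [h0, h1] using congrArg (Polynomial.eval t) hpq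

/-- A form of degree `d` vanishing to order `n` on the lines has `72 n` zeros on the curve, but its
restriction to the curve has degree at most `19 d`. -/
theorem IsSecantCurve.aeval_eq_zero {m : Fin 6 → Matrix (Fin 2) (Fin 2) ℂ}
    {γ : Fin 4 → Polynomial ℂ} {h : Fin 6 → Polynomial ℂ} (H : IsSecantCurve m γ h)
    (hdet : Pairwise fun i j => (m i - m j).det ≠ 0) {n d : ℕ} (hnd : 19 * d < 72 * n) {F : R3}
    (hF : F.IsHomogeneous d) (hFm : ∀ i, F ∈ lineIdeal (graphLine (m i)) ^ n) :
    aeval γ F = 0 := by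
  have hdvd (i : Fin 6) : h i ^ n ∣ aeval γ F := by
    have hle : lineIdeal (graphLine (m i)) ≤ (Ideal.span {h i}).comap (aeval γ) := fun G hG =>
      Ideal.mem_span_singleton.2 (dvd_aeval_of_mem_lineIdeal hG (H.dvd i))
    have hmem := (Ideal.pow_right_mono hle n).trans (Ideal.le_comap_pow _ n) (hFm i)
    rwa [Ideal.mem_comap, Ideal.span_singleton_pow, Ideal.mem_span_singleton] at hmem
  have hprod : ∏ i, h i ^ n ∣ aeval γ F :=
    Fintype.prod_dvd_of_coprime (fun i j hij => (H.isCoprime_contact (hdet hij)).pow) hdvd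
  have hdeg : (∏ i, h i ^ n).natDegree = 72 * n := by
    rw [Polynomial.natDegree_prod_of_monic _ _ fun i _ => (H.monic i).pow n]
    simp only [Polynomial.natDegree_pow, H.natDegree_eq, Finset.sum_const, Finset.card_univ,
      Fintype.card_fin, smul_eq_mul]
    ring
  by_contra hne
  have hle := Polynomial.natDegree_le_of_dvd hprod hne
  have hge := aeval_natDegree_le F hF.totalDegree_le γ H.natDegree_le
  omega

theorem exists_ne_zero_forall_evalInt_sumElim_ne_zero {σ τ : Type*}
    {P : MvPolynomial (σ ⊕ τ) ℤ} (hP : P ≠ 0) : ∃ P' : MvPolynomial σ ℤ, P' ≠ 0 ∧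
      ∀ {K : Type*} [CommRing K] (a : σ → K), evalInt a P' ≠ 0 →
        evalInt (Sum.elim (fun i => C (a i)) X : σ ⊕ τ → MvPolynomial τ K) P ≠ 0 := by
  obtain ⟨b, hb⟩ := exists_evalInt_ne_zero (A := ℤ) hP
  refine ⟨evalInt (Sum.elim X fun j => C (b (.inr j))) P, fun h0 => hb ?_,
    fun {K} _ a ha h0 => ha ?_⟩
  · have := congrArg (eval fun i => b (.inl i)) h0
    rw [map_evalInt, map_zero] at this
    rw [← this]
    congr 2
    ext (i | j) <;> simp
  · have := congrArg (eval fun j => (b (.inr j) : K)) h0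
    rw [map_evalInt, map_zero] at this
    rw [← this, map_evalInt]
    congr 2
    ext (i | j) <;> simp [evalInt]

theorem exists_ne_zero_forall_mul_le : ∃ P : MvPolynomial (Fin 6 × Fin 2 × Fin 2) ℤ, P ≠ 0 ∧
    ∀ m : Fin 6 → Matrix (Fin 2) (Fin 2) ℂ, evalInt (fun s => m s.1 s.2.1 s.2.2) P ≠ 0 →
      (Pairwise fun i j => (m i - m j).det ≠ 0) → ∀ {n d : ℕ} {F : R3}, F.IsHomogeneous d →
        (∀ i, F ∈ lineIdeal (graphLine (m i)) ^ n) → F ≠ 0 → 72 * n ≤ 19 * d := by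
  obtain ⟨P, hP, hcurve⟩ := exists_ne_zero_forall_exists_isSecantCurve ℂ
  obtain ⟨P', hP', helim⟩ := exists_ne_zero_forall_evalInt_sumElim_ne_zero hP
  refine ⟨P', hP', fun m hm hdet n d F hF hFm hF0 => ?_⟩
  by_contra! hnd
  refine mul_ne_zero (helim _ hm) hF0 (MvPolynomial.funext fun y => ?_)
  rw [map_mul, map_zero, map_evalInt, mul_eq_zero, or_iff_not_imp_left]
  intro hy
  obtain ⟨γ, h, H, hγ⟩ := hcurve _ hy
  simp only [Sum.elim_inr, eval_X] at hγ
  have hm' : lineMatrix (fun i => eval y (Sum.elim (fun s => C (m s.1 s.2.1 s.2.2)) X i)) = m := by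
    ext; simp [lineMatrix]
  rw [hm'] at H
  have hzero := congrArg (Polynomial.aeval (0 : ℂ)) (H.aeval_eq_zero hdet hnd hF hFm)
  simpa only [comp_aeval_apply, map_zero, Polynomial.coe_aeval_eq_eval, aeval_eq_eval,
    ← Polynomial.coeff_zero_eq_eval_zero, hγ] using hzero

end LowerBound

section Determinant

variable {ι A : Type*} [CommRing A] {I : Ideal A}

theorem prod_sub_prod_mem_pow {s : Finset ι} {a b : ι → A} (ha : ∀ i ∈ s, a i ∈ I)
    (hb : ∀ i ∈ s, b i ∈ I) (hab : ∀ i ∈ s, a i - b i ∈ I ^ 2) :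
    ∏ i ∈ s, a i - ∏ i ∈ s, b i ∈ I ^ (s.card + 1) := by
  classical
  induction s using Finset.induction_on with
  | empty => simp
  | insert i s hi ih =>
    simp only [Finset.forall_mem_insert] at ha hb hab
    have hprod : ∏ j ∈ s, b j ∈ I ^ s.card := by
      simpa using Ideal.prod_mem_prod (I := fun _ => I) hb.2
    rw [Finset.prod_insert hi, Finset.prod_insert hi, Finset.card_insert_of_notMem hi]
    have hsplit : a i * ∏ j ∈ s, a j - b i * ∏ j ∈ s, b j =
        a i * (∏ j ∈ s, a j - ∏ j ∈ s, b j) + (a i - b i) * ∏ j ∈ s, b j := by ring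
    rw [hsplit]
    refine Ideal.add_mem _ ?_ ?_
    · rw [pow_succ']
      exact Ideal.mul_mem_mul ha.1 (ih ha.2 hb.2 hab.2)
    · rw [add_right_comm, add_assoc, add_comm, pow_add]
      exact Ideal.mul_mem_mul hab.1 hprod

variable [Fintype ι] [DecidableEq ι]

theorem det_mem_pow {N : Matrix ι ι A} (h : ∀ i j, N i j ∈ I) : N.det ∈ I ^ Fintype.card ι := by
  rw [Matrix.det_apply]
  refine Ideal.sum_mem _ fun σ _ => Submodule.smul_of_tower_mem _ _ ?_
  simpa using Ideal.prod_mem_prod (s := Finset.univ) (I := fun _ => I) fun i _ => h (σ i) i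

theorem det_sub_det_mem_pow {N N' : Matrix ι ι A} (h : ∀ i j, N i j ∈ I) (h' : ∀ i j, N' i j ∈ I)
    (hsub : ∀ i j, N i j - N' i j ∈ I ^ 2) : N.det - N'.det ∈ I ^ (Fintype.card ι + 1) := by
  simp only [Matrix.det_apply, ← Finset.sum_sub_distrib, ← smul_sub]
  exact Ideal.sum_mem _ fun σ _ => Submodule.smul_of_tower_mem _ _ <|
    prod_sub_prod_mem_pow (fun i _ => h _ i) (fun i _ => h' _ i) fun i _ => hsub _ i

theorem isHomogeneous_det {σ : Type*} {N : Matrix ι ι (MvPolynomial σ A)} {d : ℕ}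
    (h : ∀ i j, (N i j).IsHomogeneous d) : N.det.IsHomogeneous (Fintype.card ι * d) := by
  rw [Matrix.det_apply]
  refine IsHomogeneous.sum _ _ _ fun s _ => ?_
  have hprod := IsHomogeneous.prod Finset.univ (fun i => N (s i) i) (fun _ => d) fun i _ => h _ i
  rw [Finset.sum_const, Finset.card_univ, smul_eq_mul] at hprod
  exact (homogeneousSubmodule σ A _).smul_of_tower_mem _ hprod

end Determinant

section Quadric

variable {A B : Type*} [CommRing A] [CommRing B]

/-- The determinant of two vectors of the plane. -/
def bracket (p q : Fin 2 → A) : A := p 0 * q 1 - p 1 * q 0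

/-- The bracket of the row vectors `p * adj d` and `q * adj d'`. It vanishes if `p = x * d` and
`q = x * d'` for a common row vector `x`. -/
def adjBracket (d d' : Matrix (Fin 2) (Fin 2) A) (p q : Fin 2 → A) : A :=
  bracket p (d 0) * bracket q (d' 1) - bracket p (d 1) * bracket q (d' 0)

/-- The quadric containing the graphs of three matrices. -/
def quadric (a b c : Matrix (Fin 2) (Fin 2) A) (z : Fin 4 → A) : A :=
  adjBracket (c - a) (c - b) (graphForm a z) (graphForm b z)

theorem map_adjBracket (φ : A →+* B) (d d' : Matrix (Fin 2) (Fin 2) A) (p q : Fin 2 → A) :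
    φ (adjBracket d d' p q) = adjBracket (d.map φ) (d'.map φ) (φ ∘ p) (φ ∘ q) := by
  simp [adjBracket, bracket]

theorem map_quadric (φ : A →+* B) (a b c : Matrix (Fin 2) (Fin 2) A) (z : Fin 4 → A) :
    φ (quadric a b c z) = quadric (a.map φ) (b.map φ) (c.map φ) (φ ∘ z) := by
  simp only [quadric, map_adjBracket, Matrix.map_sub _ (map_sub φ)]
  congr 1 <;> exact funext fun k => map_graphForm φ _ z k

section

variable (d d' : Matrix (Fin 2) (Fin 2) A) (p p' q q' : Fin 2 → A)

theorem adjBracket_add_left :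
    adjBracket d d' (p + p') q = adjBracket d d' p q + adjBracket d d' p' q := by
  simp only [adjBracket, bracket, Pi.add_apply]; ring

theorem adjBracket_add_right :
    adjBracket d d' p (q + q') = adjBracket d d' p q + adjBracket d d' p q' := by
  simp only [adjBracket, bracket, Pi.add_apply]; ring

theorem adjBracket_eq_sum : adjBracket d d' p q =
    ∑ e, p e * adjBracket d d' (Pi.single e 1) q := by
  simp [adjBracket, bracket, Fin.sum_univ_two]; ring

open Matrix in
theorem adjBracket_vecMul_left (x : Fin 2 → A) (D : Matrix (Fin 2) (Fin 2) A) :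
    adjBracket d d' (x ᵥ* D) q = ∑ f, x f * adjBracket d d' (D f) q := by
  simp [adjBracket, bracket, Fin.sum_univ_two, vecMul, dotProduct]; ring

open Matrix in
theorem adjBracket_vecMul_right (x : Fin 2 → A) (D : Matrix (Fin 2) (Fin 2) A) :
    adjBracket d d' p (x ᵥ* D) = ∑ f, x f * adjBracket d d' p (D f) := by
  simp [adjBracket, bracket, Fin.sum_univ_two, vecMul, dotProduct]; ring

open Matrix in
theorem adjBracket_vecMul_vecMul (x : Fin 2 → A) : adjBracket d d' (x ᵥ* d) (x ᵥ* d') = 0 := by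
  simp [adjBracket, bracket, Fin.sum_univ_two, vecMul, dotProduct]; ring

variable {p q} {I : Ideal A}

theorem bracket_mem (hp : ∀ e, p e ∈ I) : bracket p q ∈ I :=
  I.sub_mem (I.mul_mem_right _ (hp 0)) (I.mul_mem_right _ (hp 1))

theorem adjBracket_mem_left (hp : ∀ e, p e ∈ I) : adjBracket d d' p q ∈ I :=
  I.sub_mem (I.mul_mem_right _ (bracket_mem hp)) (I.mul_mem_right _ (bracket_mem hp))

theorem adjBracket_mem_right (hq : ∀ e, q e ∈ I) : adjBracket d d' p q ∈ I :=
  I.sub_mem (I.mul_mem_left _ (bracket_mem hq)) (I.mul_mem_left _ (bracket_mem hq))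

theorem adjBracket_mem_sq (hp : ∀ e, p e ∈ I) (hq : ∀ e, q e ∈ I) :
    adjBracket d d' p q ∈ I ^ 2 := by
  rw [pow_two]
  exact Ideal.sub_mem _ (Ideal.mul_mem_mul (bracket_mem hp) (bracket_mem hq))
    (Ideal.mul_mem_mul (bracket_mem hp) (bracket_mem hq))

end

open Matrix in
theorem graphForm_eq_add_vecMul (a b : Matrix (Fin 2) (Fin 2) A) (z : Fin 4 → A) :
    graphForm b z = graphForm a z + ![z 0, z 1] ᵥ* (a - b) := by
  ext k
  simp [graphForm_apply, vecMul, dotProduct, Fin.sum_univ_two]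
  ring

section

variable {a b c : Matrix (Fin 2) (Fin 2) A} {z : Fin 4 → A} {I : Ideal A}

theorem quadric_mem_of_left (h : ∀ k, graphForm a z k ∈ I) : quadric a b c z ∈ I :=
  adjBracket_mem_left _ _ h

theorem quadric_mem_of_middle (h : ∀ k, graphForm b z k ∈ I) : quadric a b c z ∈ I :=
  adjBracket_mem_right _ _ h

open Matrix in
theorem quadric_mem_of_right (h : ∀ k, graphForm c z k ∈ I) : quadric a b c z ∈ I := by
  rw [quadric, graphForm_eq_add_vecMul c a, adjBracket_add_left, graphForm_eq_add_vecMul c b,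
    adjBracket_add_right _ _ (![z 0, z 1] ᵥ* (c - a)), adjBracket_vecMul_vecMul, add_zero]
  exact I.add_mem (adjBracket_mem_left _ _ h) (adjBracket_mem_right _ _ h)

end

theorem isHomogeneous_graphForm (a : Matrix (Fin 2) (Fin 2) A) (k : Fin 2) :
    (graphForm (a.map C) X k : MvPolynomial (Fin 4) A).IsHomogeneous 1 := by
  rw [graphForm_apply]
  have hX (i) := isHomogeneous_X A (σ := Fin 4) i
  have hC (x) := isHomogeneous_C (Fin 4) (R := A) x
  exact (hX _).sub (((hX 0).mul (hC _)).add ((hX 1).mul (hC _)))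

theorem isHomogeneous_quadric (a b c : Matrix (Fin 2) (Fin 2) A) :
    (quadric (a.map C) (b.map C) (c.map C) X : MvPolynomial (Fin 4) A).IsHomogeneous 2 := by
  have hbracket {p : Fin 2 → MvPolynomial (Fin 4) A} (hp : ∀ k, (p k).IsHomogeneous 1)
      (d : Matrix (Fin 2) (Fin 2) A) (r : Fin 2) : (bracket p (d.map C r)).IsHomogeneous 1 :=
    ((hp 0).mul (isHomogeneous_C _ _)).sub ((hp 1).mul (isHomogeneous_C _ _))
  rw [quadric, adjBracket, ← Matrix.map_sub _ (map_sub C), ← Matrix.map_sub _ (map_sub C)]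
  have ha := hbracket (isHomogeneous_graphForm a)
  have hb := hbracket (isHomogeneous_graphForm b)
  exact ((ha _ _).mul (hb _ _)).sub ((ha _ _).mul (hb _ _))

end Quadric

section SpecialForm

variable {A B : Type*} [CommRing A] [CommRing B]

section Expansion

open Matrix

variable (l a b c : Matrix (Fin 2) (Fin 2) A) (z : Fin 4 → A)

/-- The part of `quadric a b c` which is linear in the equations of the graph of `a`. -/
def quadricTangent : A :=
  adjBracket (c - a) (c - b) (graphForm a z) (![z 0, z 1] ᵥ* (a - b))

/-- The restriction of `quadric a b c` to the graph of `l`, a binary form in `z 0` and `z 1`. -/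
def quadricRestrict : A :=
  adjBracket (c - a) (c - b) (![z 0, z 1] ᵥ* (l - a)) (![z 0, z 1] ᵥ* (l - b))

/-- The coefficients of `quadricTangent`: the `e`-th equation of the graph of `a` is multiplied by
the linear form with coefficients `tangentCoeff a b c e`. -/
def tangentCoeff (e f : Fin 2) : A := adjBracket (c - a) (c - b) (Pi.single e 1) ((a - b) f)

/-- The coefficients of `quadricRestrict`, as a bilinear form. -/
def restrictCoeff (f g : Fin 2) : A := adjBracket (c - a) (c - b) ((l - a) f) ((l - b) g)

variable {a z}

theorem quadricTangent_mem {I : Ideal A} (h : ∀ k, graphForm a z k ∈ I) :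
    quadricTangent a b c z ∈ I :=
  adjBracket_mem_left _ _ h

theorem quadric_sub_quadricTangent_mem {I : Ideal A} (h : ∀ k, graphForm a z k ∈ I) :
    quadric a b c z - quadricTangent a b c z ∈ I ^ 2 := by
  rw [quadric, graphForm_eq_add_vecMul a b, adjBracket_add_right, quadricTangent,
    add_sub_cancel_right]
  exact adjBracket_mem_sq _ _ h h

variable {l} in
theorem quadric_sub_quadricRestrict_mem {I : Ideal A} (h : ∀ k, graphForm l z k ∈ I) :
    quadric a b c z - quadricRestrict l a b c z ∈ I := by
  rw [quadric, graphForm_eq_add_vecMul l a, graphForm_eq_add_vecMul l b, adjBracket_add_left,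
    adjBracket_add_right _ _ (![z 0, z 1] ᵥ* (l - a)), quadricRestrict, ← add_assoc,
    add_sub_cancel_right]
  exact I.add_mem (adjBracket_mem_left _ _ h) (adjBracket_mem_right _ _ h)

variable (a z)

theorem quadricTangent_eq : quadricTangent a b c z =
    ∑ e, graphForm a z e * (tangentCoeff a b c e 0 * z 0 + tangentCoeff a b c e 1 * z 1) := by
  rw [quadricTangent, adjBracket_eq_sum]
  refine Finset.sum_congr rfl fun e _ => congrArg _ ?_
  simp [adjBracket_vecMul_right, tangentCoeff, mul_comm]

theorem quadricRestrict_eq : quadricRestrict l a b c z =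
    restrictCoeff l a b c 0 0 * z 0 ^ 2 +
      (restrictCoeff l a b c 0 1 + restrictCoeff l a b c 1 0) * (z 0 * z 1) +
        restrictCoeff l a b c 1 1 * z 1 ^ 2 := by
  simp only [quadricRestrict, adjBracket_vecMul_left, adjBracket_vecMul_right, restrictCoeff,
    Fin.sum_univ_two, cons_val_zero, cons_val_one]
  ring

end Expansion

/-- The quartics used are products of a quadric through the graphs `0`, `quarticIndex k 0`,
`quarticIndex k 1` and one through the graphs `1`, `quarticIndex k 2`, `quarticIndex k 3`. -/
def quarticIndex : Fin 5 → Fin 4 → Fin 6 :=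
  ![![2, 3, 4, 5], ![4, 5, 2, 3], ![2, 4, 3, 5], ![3, 5, 2, 4], ![2, 5, 3, 4]]

section

variable (m : Fin 6 → Matrix (Fin 2) (Fin 2) A) (z : Fin 4 → A) (k : Fin 5)

/-- Five quartics containing the graphs of six matrices. -/
def quartic : A :=
  let s := quarticIndex k
  quadric (m 0) (m (s 0)) (m (s 1)) z * quadric (m 1) (m (s 2)) (m (s 3)) z

/-- The parts of the five quartics which are linear in the equations of the zeroth graph. -/
def linearPart : A :=
  let s := quarticIndex k
  quadricTangent (m 0) (m (s 0)) (m (s 1)) z * quadricRestrict (m 0) (m 1) (m (s 2)) (m (s 3)) z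

/-- The coefficients of the binary cubic by which the `e`-th equation of the zeroth graph is
multiplied in `linearPart`. -/
def cubicCoeff (e : Fin 2) : ℕ → A :=
  let s := quarticIndex k
  let t := tangentCoeff (m 0) (m (s 0)) (m (s 1)) e
  let r := restrictCoeff (m 0) (m 1) (m (s 2)) (m (s 3))
  fun
  | 0 => t 0 * r 0 0
  | 1 => t 0 * (r 0 1 + r 1 0) + t 1 * r 0 0
  | 2 => t 0 * r 1 1 + t 1 * (r 0 1 + r 1 0)
  | 3 => t 1 * r 1 1
  | _ => 0

/-- The matrix of multiplication by `linearPart` from the binary quadratic forms to the pairs of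
binary quintic forms. -/
def normalBlock : Matrix (Fin 2 × Fin 6) (Fin 3) A :=
  .of fun r l => if (l : ℕ) ≤ r.2 then cubicCoeff m k r.1 (r.2 - l) else 0

/-- An identification of the rows of the first four blocks with their columns. -/
def blockEquiv : Fin 2 × Fin 6 ≃ Fin 4 × Fin 3 :=
  (finProdFinEquiv : Fin 2 × Fin 6 ≃ Fin 12).trans (finProdFinEquiv : Fin 4 × Fin 3 ≃ Fin 12).symm

/-- The square matrix formed by the first four blocks. -/
def squareBlock : Matrix (Fin 2 × Fin 6) (Fin 2 × Fin 6) A :=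
  .of fun r c => normalBlock m (blockEquiv c).1.castSucc r (blockEquiv c).2

/-- The quadratic syzygies, up to scaling, between the linear parts of the five quartics, obtained
from Cramer's rule; the columns of the matrices are the three syzygies. -/
def syzygy : Fin 5 → Matrix (Fin 3) (Fin 3) A :=
  Fin.snoc (α := fun _ => Matrix (Fin 3) (Fin 3) A)
    (fun k => .of fun l i =>
      -((squareBlock m).adjugate * normalBlock m (Fin.last 4)) (blockEquiv.symm (k, l)) i)
    ((squareBlock m).det • 1)

/-- The form of degree `12` vanishing to order `4` on the zeroth graph and to order `3` on the
other five. -/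
def specialForm : A := (∑ k, quartic m z k • syzygy m k).det

theorem syzygy_last : syzygy m (Fin.last 4) = (squareBlock m).det • 1 :=
  Fin.snoc_last ..

theorem sum_normalBlock_mul_syzygy : ∑ k, normalBlock m k * syzygy m k = 0 := by
  have hcramer : squareBlock m * ((squareBlock m).adjugate * normalBlock m (Fin.last 4)) =
      (squareBlock m).det • normalBlock m (Fin.last 4) := by
    rw [← Matrix.mul_assoc, Matrix.mul_adjugate, Matrix.smul_mul, Matrix.one_mul]
  rw [Fin.sum_univ_castSucc, add_eq_zero_iff_eq_neg]
  simp only [syzygy_last, Matrix.mul_smul, Matrix.mul_one]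
  rw [← hcramer]
  ext r i
  simp only [syzygy, Fin.snoc_castSucc, Matrix.sum_apply, Matrix.mul_apply (M := normalBlock m _),
    Matrix.of_apply, mul_neg, Finset.sum_neg_distrib, Matrix.neg_apply,
    Matrix.mul_apply (M := squareBlock m)]
  rw [← Fintype.sum_prod_type', ← blockEquiv.sum_comp]
  simp [squareBlock]

/-- The monomials of degree `n` in the first two coordinates. -/
def binaryMonomial (n : ℕ) (j : Fin (n + 1)) : A := z 0 ^ (n - j : ℕ) * z 1 ^ (j : ℕ)

open Matrix in
theorem linearPart_smul_binaryMonomial : linearPart m z k • binaryMonomial z 2 =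
    (fun r => graphForm (m 0) z r.1 * binaryMonomial z 5 r.2) ᵥ* normalBlock m k := by
  ext l
  rw [Pi.smul_apply, smul_eq_mul, linearPart, quadricTangent_eq, quadricRestrict_eq]
  simp only [vecMul, dotProduct, Fintype.sum_prod_type, Fin.sum_univ_two, Fin.sum_univ_six,
    normalBlock, of_apply, binaryMonomial]
  fin_cases l <;> simp [cubicCoeff] <;> ring

open Matrix in
theorem binaryMonomial_vecMul_syzygy :
    binaryMonomial z 2 ᵥ* ∑ k, linearPart m z k • syzygy m k = 0 := by
  simp only [vecMul_sum, vecMul_smul, ← smul_vecMul, linearPart_smul_binaryMonomial, vecMul_vecMul]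
  rw [← vecMul_sum, sum_normalBlock_mul_syzygy, vecMul_zero]

theorem det_sum_linearPart_smul_syzygy [IsDomain A] (hz : z 0 ≠ 0) :
    (∑ k, linearPart m z k • syzygy m k).det = 0 := by
  refine Matrix.exists_vecMul_eq_zero_iff.1
    ⟨_, fun h => hz ?_, binaryMonomial_vecMul_syzygy m z⟩
  simpa [binaryMonomial] using congrFun h 0

variable {m z} {I : Ideal A}

theorem quartic_mem {j : Fin 6} (h : ∀ e, graphForm (m j) z e ∈ I) : quartic m z k ∈ I := by
  have hcover : ∀ (j : Fin 6) k, j = 0 ∨ j = quarticIndex k 0 ∨ j = quarticIndex k 1 ∨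
      j = 1 ∨ j = quarticIndex k 2 ∨ j = quarticIndex k 3 := by decide
  obtain rfl | rfl | rfl | rfl | rfl | rfl := hcover j k
  · exact I.mul_mem_right _ (quadric_mem_of_left h)
  · exact I.mul_mem_right _ (quadric_mem_of_middle h)
  · exact I.mul_mem_right _ (quadric_mem_of_right h)
  · exact I.mul_mem_left _ (quadric_mem_of_left h)
  · exact I.mul_mem_left _ (quadric_mem_of_middle h)
  · exact I.mul_mem_left _ (quadric_mem_of_right h)

theorem linearPart_mem (h : ∀ e, graphForm (m 0) z e ∈ I) : linearPart m z k ∈ I :=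
  I.mul_mem_right _ (quadricTangent_mem _ _ h)

theorem quartic_sub_linearPart_mem (h : ∀ e, graphForm (m 0) z e ∈ I) :
    quartic m z k - linearPart m z k ∈ I ^ 2 := by
  have hsplit (a b c d : A) : a * b - c * d = (a - c) * b + c * (b - d) := by ring
  rw [quartic, linearPart, hsplit]
  refine Ideal.add_mem _ (Ideal.mul_mem_right _ _ (quadric_sub_quadricTangent_mem _ _ h)) ?_
  rw [pow_two]
  exact Ideal.mul_mem_mul (quadricTangent_mem _ _ h) (quadric_sub_quadricRestrict_mem _ _ h)

theorem sum_smul_syzygy_mem {q : Fin 5 → A} (h : ∀ k, q k ∈ I) (i l : Fin 3) :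
    (∑ k, q k • syzygy m k) i l ∈ I := by
  rw [Matrix.sum_apply]
  exact I.sum_mem fun k _ => I.mul_mem_right _ (h k)

theorem specialForm_mem_pow_three {j : Fin 6} (h : ∀ e, graphForm (m j) z e ∈ I) :
    specialForm m z ∈ I ^ 3 :=
  det_mem_pow (sum_smul_syzygy_mem fun k => quartic_mem k h)

theorem specialForm_mem_pow_four [IsDomain A] (hz : z 0 ≠ 0)
    (h : ∀ e, graphForm (m 0) z e ∈ I) : specialForm m z ∈ I ^ 4 := by
  have hsub : specialForm m z - (∑ k, linearPart m z k • syzygy m k).det ∈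
      I ^ (Fintype.card (Fin 3) + 1) := by
    refine det_sub_det_mem_pow (sum_smul_syzygy_mem fun k => quartic_mem k h)
      (sum_smul_syzygy_mem fun k => linearPart_mem k h) fun i l => ?_
    simp only [← Matrix.sub_apply, ← Finset.sum_sub_distrib, ← sub_smul]
    exact sum_smul_syzygy_mem (fun k => quartic_sub_linearPart_mem k h) i l
  rwa [det_sum_linearPart_smul_syzygy m z hz, sub_zero] at hsub

end

section Map

variable (φ : A →+* B) (m : Fin 6 → Matrix (Fin 2) (Fin 2) A) (k : Fin 5)

theorem map_quartic (z : Fin 4 → A) :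
    φ (quartic m z k) = quartic (fun i => (m i).map φ) (φ ∘ z) k := by
  simp only [quartic, map_mul, map_quadric]

theorem map_row_sub (a b : Matrix (Fin 2) (Fin 2) A) (f : Fin 2) :
    φ ∘ (a - b) f = (a.map φ - b.map φ) f := by
  ext; simp

theorem map_tangentCoeff (a b c : Matrix (Fin 2) (Fin 2) A) (e f : Fin 2) :
    φ (tangentCoeff a b c e f) = tangentCoeff (a.map φ) (b.map φ) (c.map φ) e f := by
  have hsingle : φ ∘ Pi.single e (1 : A) = Pi.single e 1 := by
    ext i; simp [Pi.single_apply, apply_ite φ]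
  rw [tangentCoeff, map_adjBracket, map_row_sub, hsingle, Matrix.map_sub _ (map_sub φ),
    Matrix.map_sub _ (map_sub φ), tangentCoeff]

theorem map_restrictCoeff (l a b c : Matrix (Fin 2) (Fin 2) A) (f g : Fin 2) :
    φ (restrictCoeff l a b c f g) =
      restrictCoeff (l.map φ) (a.map φ) (b.map φ) (c.map φ) f g := by
  rw [restrictCoeff, map_adjBracket, map_row_sub, map_row_sub, Matrix.map_sub _ (map_sub φ),
    Matrix.map_sub _ (map_sub φ), restrictCoeff]

theorem map_cubicCoeff (e : Fin 2) (n : ℕ) :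
    φ (cubicCoeff m k e n) = cubicCoeff (fun i => (m i).map φ) k e n := by
  unfold cubicCoeff
  dsimp only
  split <;> simp only [map_add, map_mul, map_zero, map_tangentCoeff, map_restrictCoeff]

theorem map_normalBlock :
    (normalBlock m k).map φ = normalBlock (fun i => (m i).map φ) k := by
  ext r l
  simp [normalBlock, apply_ite φ, map_cubicCoeff]

theorem map_squareBlock :
    (squareBlock m).map φ = squareBlock fun i => (m i).map φ := by
  ext r c
  simp only [squareBlock, Matrix.map_apply, Matrix.of_apply, ← map_normalBlock]

theorem map_syzygy : (syzygy m k).map φ = syzygy (fun i => (m i).map φ) k := by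
  have hadj := φ.map_adjugate (squareBlock m)
  have hdet := φ.map_det (squareBlock m)
  simp only [RingHom.mapMatrix_apply, map_squareBlock] at hadj hdet
  refine Fin.lastCases ?_ (fun k => ?_) k
  · ext i j
    simp [-Fin.reduceLast, syzygy_last, hdet, Matrix.one_apply, apply_ite φ]
  · ext l i
    simp only [syzygy, Fin.snoc_castSucc, Matrix.map_apply, Matrix.of_apply, map_neg, ← hadj,
      ← map_normalBlock, ← Matrix.map_mul]

theorem map_specialForm (z : Fin 4 → A) :
    φ (specialForm m z) = specialForm (fun i => (m i).map φ) (φ ∘ z) := by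
  rw [specialForm, φ.map_det, specialForm, map_sum]
  congr 1
  refine Finset.sum_congr rfl fun k _ => ?_
  ext i j
  simp [← map_quartic, ← map_syzygy]

end Map

theorem isHomogeneous_specialForm (m : Fin 6 → Matrix (Fin 2) (Fin 2) A) :
    (specialForm (fun i => (m i).map C) X : MvPolynomial (Fin 4) A).IsHomogeneous 12 := by
  refine isHomogeneous_det (d := 4) fun i l => ?_
  rw [Matrix.sum_apply]
  refine IsHomogeneous.sum _ _ _ fun k _ => ?_
  rw [← map_syzygy, Matrix.smul_apply, Matrix.map_apply, smul_eq_mul]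
  exact ((isHomogeneous_quadric _ _ _).mul (isHomogeneous_quadric _ _ _)).mul
    (isHomogeneous_C _ _)

end SpecialForm

section UpperBound

theorem eq_zero_of_spans {ρ ι : Type*} [Fintype ι] {p n : ℕ} [Fact p.Prime] (e : Fin n ≃ ι)
    {T : Matrix ρ ι (ZMod p)} {rows : List ρ}
    (h : spans p n (rows.map fun r => List.ofFn fun j => (T r (e j)).val)) {v : ι → ZMod p}
    (hv : T.mulVec v = 0) : v = 0 := by
  have hzero : ∀ x ∈ List.ofFn (v ∘ e), x ∈ (⊥ : Submodule (ZMod p) (ZMod p)) := by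
    refine mem_of_spans _ h (by simp) (by simp) ?_
    simp only [List.forall_mem_map, Submodule.mem_bot]
    intro r _
    calc lincomb _ _ = ∑ j, T r (e j) * v (e j) := by
          rw [← List.sum_ofFn]
          simp [lincomb, List.ofFn_eq_map, List.zipWith_map, List.zipWith_self]
      _ = T.mulVec v r := e.sum_comp fun j => T r j * v j
      _ = 0 := congrFun hv r
  ext j
  simpa using hzero _ (List.mem_ofFn.2 ⟨e.symm j, rfl⟩)

/-- The linear conditions on a vector of five triples to be a syzygy between the linear parts of the
quartics, on the left, and between the quartics at a point, on the right. -/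
def syzygyConditions {A : Type*} [CommRing A] (m : Fin 6 → Matrix (Fin 2) (Fin 2) A)
    (q : Fin 5 → A) : Matrix ((Fin 2 × Fin 6) ⊕ Fin 3) (Fin 5 × Fin 3) A :=
  .of fun r c => r.elim (fun r => normalBlock m c.1 r c.2) fun l => if l = c.2 then q c.1 else 0

theorem specialForm_ne_zero {K : Type*} [Field K] {m : Fin 6 → Matrix (Fin 2) (Fin 2) K}
    {z : Fin 4 → K} (hsquare : ∀ v, (squareBlock m).mulVec v = 0 → v = 0)
    (hsyz : ∀ w, (syzygyConditions m (quartic m z)).mulVec w = 0 → w = 0) :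
    specialForm m z ≠ 0 := by
  have hdet : (squareBlock m).det ≠ 0 := fun h => by
    obtain ⟨v, hv0, hv⟩ := Matrix.exists_mulVec_eq_zero_iff.2 h
    exact hv0 (hsquare v hv)
  rw [specialForm, Ne, ← Matrix.exists_mulVec_eq_zero_iff]
  rintro ⟨y, hy0, hy⟩
  let w : Fin 5 × Fin 3 → K := fun c => (syzygy m c.1).mulVec y c.2
  have hw : (syzygyConditions m (quartic m z)).mulVec w = 0 := by
    ext (r | l)
    · have hr : ∑ k, (normalBlock m k).mulVec ((syzygy m k).mulVec y) = 0 := by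
        simp only [Matrix.mulVec_mulVec, ← Matrix.sum_mulVec, sum_normalBlock_mul_syzygy,
          Matrix.zero_mulVec]
      simpa [-Matrix.mulVec_mulVec, Matrix.mulVec, dotProduct, w, syzygyConditions,
        Fintype.sum_prod_type] using congrFun hr r
    · have hl := congrFun hy l
      simp only [Matrix.sum_mulVec, Matrix.smul_mulVec] at hl
      simpa [Matrix.mulVec, dotProduct, w, syzygyConditions, Fintype.sum_prod_type] using hl
  have hlast : (squareBlock m).det • y = 0 := by
    ext l
    simpa [-Fin.reduceLast, w, syzygy_last, Matrix.smul_mulVec] using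
      congrFun (hsyz w hw) (Fin.last 4, l)
  exact hy0 ((smul_eq_zero.1 hlast).resolve_left hdet)

/-- The reference point. -/
def refPoint : Fin 4 → ZMod 31 := refParam ∘ .inr

local instance : Fact (Nat.Prime 31) := ⟨by norm_num⟩

theorem spans_refSquareBlock :
    spans 31 12 ((List.finRange 2 ×ˢ List.finRange 6).map fun r => List.ofFn fun j : Fin 12 =>
      (squareBlock (lineMatrix refParam) r (finProdFinEquiv.symm j)).val) := by
  decide +kernel

theorem spans_refSyzygyConditions :
    spans 31 15 (((List.finRange 2 ×ˢ List.finRange 6).map Sum.inl ++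
      (List.finRange 3).map Sum.inr).map fun r => List.ofFn fun j : Fin 15 =>
        (syzygyConditions (lineMatrix refParam) (quartic (lineMatrix refParam) refPoint) r
          (finProdFinEquiv.symm j)).val) := by
  decide +kernel

theorem specialForm_ref_ne_zero : specialForm (lineMatrix refParam) refPoint ≠ 0 :=
  specialForm_ne_zero (fun _ => eq_zero_of_spans finProdFinEquiv.symm spans_refSquareBlock)
    fun _ => eq_zero_of_spans finProdFinEquiv.symm spans_refSyzygyConditions

/-- The form of degree `12` with the given matrices and coordinates as indeterminates. -/
def universalForm : MvPolynomial SecantParam ℤ := specialForm (lineMatrix X) (X ∘ .inr)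

theorem evalInt_universalForm {A : Type*} [CommRing A] (x : SecantParam → A) :
    evalInt x universalForm = specialForm (lineMatrix x) (x ∘ .inr) := by
  rw [universalForm, map_specialForm]
  congr 1
  · ext i j k
    simp [lineMatrix]
  · ext c
    simp

theorem universalForm_ne_zero : universalForm ≠ 0 := fun h =>
  specialForm_ref_ne_zero <| by rw [refPoint, ← evalInt_universalForm, h, map_zero]

theorem exists_ne_zero_forall_specialForm_ne_zero :
    ∃ P : MvPolynomial (Fin 6 × Fin 2 × Fin 2) ℤ, P ≠ 0 ∧
      ∀ m : Fin 6 → Matrix (Fin 2) (Fin 2) ℂ, evalInt (fun s => m s.1 s.2.1 s.2.2) P ≠ 0 →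
        specialForm (fun i => (m i).map C) (X : Fin 4 → R3) ≠ 0 := by
  obtain ⟨P, hP, helim⟩ := exists_ne_zero_forall_evalInt_sumElim_ne_zero universalForm_ne_zero
  refine ⟨P, hP, fun m hm => ?_⟩
  have := helim _ hm
  rwa [evalInt_universalForm] at this

theorem graphForm_X_mem_lineIdeal (m : Matrix (Fin 2) (Fin 2) ℂ) (k : Fin 2) :
    graphForm (m.map C) X k ∈ lineIdeal (graphLine m) := fun z hz => by
  simpa [graphForm_apply] using congrFun (mem_graphLine.1 hz) k

theorem prod_specialForm_mem (m : Fin 6 → Matrix (Fin 2) (Fin 2) ℂ) (i : Fin 6) :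
    ∏ s, specialForm (fun j => (m (Equiv.swap 0 s j)).map C) X ∈
      lineIdeal (graphLine (m i)) ^ 19 := by
  have hmem (s : Fin 6) : specialForm (fun j => (m (Equiv.swap 0 s j)).map C) X ∈
      lineIdeal (graphLine (m i)) ^ if s = i then 4 else 3 := by
    split_ifs with hs
    · subst hs
      exact specialForm_mem_pow_four (X_ne_zero _) fun e => by
        simpa using graphForm_X_mem_lineIdeal (m s) e
    · exact specialForm_mem_pow_three (j := Equiv.swap 0 s i) fun e => by
        simpa using graphForm_X_mem_lineIdeal (m i) e
  have hprod := Ideal.prod_mem_prod (s := Finset.univ) fun s _ => hmem s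
  have hsum : ∀ i : Fin 6, ∑ s, (if s = i then 4 else 3) = 19 := by decide
  rwa [Finset.prod_pow_eq_pow_sum, hsum] at hprod

theorem exists_ne_zero_forall_exists_mem_pow :
    ∃ P : MvPolynomial (Fin 6 × Fin 2 × Fin 2) ℤ, P ≠ 0 ∧
      ∀ m : Fin 6 → Matrix (Fin 2) (Fin 2) ℂ, evalInt (fun s => m s.1 s.2.1 s.2.2) P ≠ 0 →
        ∃ F : R3, F ≠ 0 ∧ F.IsHomogeneous 72 ∧ ∀ i, F ∈ lineIdeal (graphLine (m i)) ^ 19 := by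
  obtain ⟨P, hP, hne⟩ := exists_ne_zero_forall_specialForm_ne_zero
  refine ⟨∏ s, rename (Prod.map (Equiv.swap 0 s) id) P, Finset.prod_ne_zero_iff.2 fun s _ => ?_,
    fun m hm => ⟨_, Finset.prod_ne_zero_iff.2 fun s _ => hne (m ∘ Equiv.swap 0 s) ?_, ?_,
      prod_specialForm_mem m⟩⟩
  · exact (map_ne_zero_iff _ (rename_injective _
      ((Equiv.swap 0 s).injective.prodMap Function.injective_id))).2 hP
  · rw [map_prod, Finset.prod_ne_zero_iff] at hm
    simpa [evalInt, eval₂_rename, Function.comp_def] using hm s (Finset.mem_univ s)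
  · simpa using IsHomogeneous.prod Finset.univ _ (fun _ => 12)
      fun s _ => isHomogeneous_specialForm (m ∘ Equiv.swap 0 s)

end UpperBound

section WaldschmidtConstant

theorem iInf_alphaDeg_div_eq {ι : Type*} {I : ι → Ideal R3} {n : ℕ+} {d : ℕ} {F : R3}
    (hF0 : F ≠ 0) (hFd : F.IsHomogeneous d) (hF : ∀ i, F ∈ I i ^ (n : ℕ))
    (hle : ∀ {m e : ℕ} {G : R3}, G.IsHomogeneous e → (∀ i, G ∈ I i ^ m) → G ≠ 0 →
      d * m ≤ n * e) :
    (⨅ m : ℕ+, (alphaDeg (⨅ i, I i ^ (m : ℕ)) : ℝ) / (m : ℝ)) = d / n := by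
  refine le_antisymm (ciInf_le_of_le ⟨0, ?_⟩ n ?_) (le_ciInf fun m => ?_)
  · rintro _ ⟨m, rfl⟩
    positivity
  · have : alphaDeg (⨅ i, I i ^ (n : ℕ)) ≤ d := Nat.sInf_le ⟨F, Ideal.mem_iInf.2 hF, hF0, hFd⟩
    gcongr
  · obtain ⟨G, hG, hG0, hGd⟩ : alphaDeg (⨅ i, I i ^ (m : ℕ)) ∈
        {e | ∃ G ∈ ⨅ i, I i ^ (m : ℕ), G ≠ 0 ∧ G.IsHomogeneous e} :=
      Nat.sInf_mem ⟨d * m, F ^ (m : ℕ), Ideal.mem_iInf.2 fun i =>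
        Ideal.pow_mem_pow (Ideal.pow_le_self n.ne_zero (hF i)) _, pow_ne_zero _ hF0, hFd.pow _⟩
    rw [div_le_div_iff₀ (by positivity) (by positivity), mul_comm (_ : ℝ) (n : ℝ)]
    exact_mod_cast hle hGd (Ideal.mem_iInf.1 hG) hG0

end WaldschmidtConstant

section SpanningVectors

variable {A : Type*}

/-- The first two coordinates of two vectors, as the rows of a matrix. -/
def leftBlock (v : Fin 2 → Fin 4 → A) : Matrix (Fin 2) (Fin 2) A := .of fun i k => v i (k.castAdd 2)

/-- The last two coordinates of two vectors, as the rows of a matrix. -/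
def rightBlock (v : Fin 2 → Fin 4 → A) : Matrix (Fin 2) (Fin 2) A := .of fun i k => v i (k.addNat 2)

theorem exists_leftBlock_eq_rightBlock_eq (m m' : Matrix (Fin 2) (Fin 2) A) :
    ∃ v, leftBlock v = m ∧ rightBlock v = m' :=
  ⟨fun i => ![m i 0, m i 1, m' i 0, m' i 1], by ext i k; fin_cases k <;> rfl,
    by ext i k; fin_cases k <;> rfl⟩

theorem linearIndependent_of_det_leftBlock_ne_zero {K : Type*} [Field K] {v : Fin 2 → Fin 4 → K}
    (hv : (leftBlock v).det ≠ 0) : LinearIndependent K ![v 0, v 1] := by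
  rw [show ![v 0, v 1] = v from funext (Fin.forall_fin_two.2 ⟨rfl, rfl⟩)]
  exact .of_comp (LinearMap.funLeft K K (Fin.castAdd 2))
    (Matrix.linearIndependent_rows_of_det_ne_zero hv)

theorem span_eq_graphLine {v : Fin 2 → C4} {m : Matrix (Fin 2) (Fin 2) ℂ}
    (hv : (leftBlock v).det ≠ 0) (hm : leftBlock v * m = rightBlock v) :
    Submodule.span ℂ {v 0, v 1} = graphLine m := by
  have hmem (i : Fin 2) : v i ∈ graphLine m := mem_graphLine.2 <| funext fun k => by
    simpa [Matrix.mul_apply, leftBlock, rightBlock, graphForm_apply, sub_eq_zero] using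
      (congrFun (congrFun hm i) k).symm
  refine le_antisymm (Submodule.span_le.2 (by simp [Set.insert_subset_iff, hmem])) fun z hz => ?_
  let y := Matrix.vecMul ![z 0, z 1] (leftBlock v)⁻¹
  have hy : Matrix.vecMul y (leftBlock v) = ![z 0, z 1] := by
    simp [y, Matrix.vecMul_vecMul, Matrix.nonsing_inv_mul _ hv.isUnit]
  have hy' : Matrix.vecMul y (rightBlock v) = Matrix.vecMul ![z 0, z 1] m := by
    rw [← hm, ← Matrix.vecMul_vecMul, hy]
  have hyz : y 0 • v 0 + y 1 • v 1 = z := by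
    have hl (k : Fin 2) := congrFun hy k
    have hz (k : Fin 2) : z (k.addNat 2) = z 0 * m 0 k + z 1 * m 1 k :=
      sub_eq_zero.1 (congrFun (mem_graphLine.1 hz) k)
    have hr (k : Fin 2) : Matrix.vecMul y (rightBlock v) k = z (k.addNat 2) := by
      rw [hy', hz]
      simp [Matrix.vecMul, dotProduct]
    simp only [Matrix.vecMul, dotProduct, Fin.sum_univ_two] at hl hr
    ext c
    fin_cases c
    · exact hl 0
    · exact hl 1
    · exact hr 0
    · exact hr 1
  exact hyz ▸ add_mem (Submodule.smul_mem _ _ (Submodule.subset_span (by simp)))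
    (Submodule.smul_mem _ _ (Submodule.subset_span (by simp)))

theorem graphLine_inf_graphLine {m m' : Matrix (Fin 2) (Fin 2) ℂ} (hdet : (m - m').det ≠ 0) :
    graphLine m ⊓ graphLine m' = ⊥ :=
  (Submodule.eq_bot_iff _).2 fun _ hz =>
    eq_zero_of_graphForm_eq_zero hdet (mem_graphLine.1 hz.1) (mem_graphLine.1 hz.2)

end SpanningVectors

section GeneralLines

/-- Square matrices of pairwise distinct indeterminates. -/
def genericMatrix {ι : Type*} (n : Type*) (i : ι) : Matrix n n (MvPolynomial (ι × n × n) ℤ) :=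
  .of fun j k => X (i, j, k)

theorem evalInt_det_genericMatrix_sub {ι n A : Type*} [Fintype n] [DecidableEq n] [CommRing A]
    (m : ι → Matrix n n A) (i j : ι) :
    evalInt (fun s => m s.1 s.2.1 s.2.2) (genericMatrix n i - genericMatrix n j).det =
      (m i - m j).det := by
  rw [RingHom.map_det]
  congr 1
  ext
  simp [genericMatrix]

theorem exists_ne_zero_forall_det_sub_ne_zero (ι n A : Type*) [Finite ι] [Fintype n]
    [DecidableEq n] [Nonempty n] [CommRing A] :
    ∃ P : MvPolynomial (ι × n × n) ℤ, P ≠ 0 ∧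
      ∀ m : ι → Matrix n n A, evalInt (fun s => m s.1 s.2.1 s.2.2) P ≠ 0 →
        Pairwise fun i j => (m i - m j).det ≠ 0 := by
  classical
  cases nonempty_fintype ι
  refine ⟨∏ p ∈ Finset.univ.offDiag, (genericMatrix n p.1 - genericMatrix n p.2).det,
    Finset.prod_ne_zero_iff.2 fun p hp h => ?_, fun m hm i j hij h => hm ?_⟩
  · simpa [h, (Finset.mem_offDiag.1 hp).2.2] using
      evalInt_det_genericMatrix_sub (Pi.single p.1 (1 : Matrix n n ℤ)) p.1 p.2
  · rw [map_prod]
    apply Finset.prod_eq_zero (i := (i, j)) (by simpa using hij)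
    rw [evalInt_det_genericMatrix_sub, h]

/-- Clears the denominators in the value of an integral polynomial at the fractions `n s / d s`. -/
theorem exists_map_eq_map_mul_evalInt {σ S B : Type*} [CommRing S] [CommRing B] (n d : σ → S)
    (P : MvPolynomial σ ℤ) :
    ∃ Q, ∃ D ∈ Submonoid.closure (Set.range d), ∀ (φ : S →+* B) (x : σ → B),
      (∀ s, φ (d s) * x s = φ (n s)) → φ Q = φ D * evalInt x P := by
  induction P using MvPolynomial.induction_on with
  | C a => exact ⟨a, 1, one_mem _, fun φ x _ => by simp [evalInt]⟩
  | add P P' ih ih' =>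
    obtain ⟨Q, D, hD, h⟩ := ih
    obtain ⟨Q', D', hD', h'⟩ := ih'
    refine ⟨Q * D' + D * Q', D * D', mul_mem hD hD', fun φ x hx => ?_⟩
    simp only [map_add, map_mul, h φ x hx, h' φ x hx]
    ring
  | mul_X P s ih =>
    obtain ⟨Q, D, hD, h⟩ := ih
    refine ⟨Q * n s, D * d s, mul_mem hD (Submonoid.subset_closure ⟨s, rfl⟩), fun φ x hx => ?_⟩
    simp only [map_mul, h φ x hx, ← hx, evalInt_X]
    ring

theorem map_leftBlock {A B : Type*} [CommRing A] [CommRing B] (φ : A →+* B)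
    (v : Fin 2 → Fin 4 → A) : (leftBlock v).map φ = leftBlock fun k c => φ (v k c) := rfl

theorem map_rightBlock {A B : Type*} [CommRing A] [CommRing B] (φ : A →+* B)
    (v : Fin 2 → Fin 4 → A) : (rightBlock v).map φ = rightBlock fun k c => φ (v k c) := rfl

theorem map_adjugate_leftBlock_mul_rightBlock {A B : Type*} [CommRing A] [CommRing B]
    (φ : A →+* B) (v : Fin 2 → Fin 4 → A) (k l : Fin 2) :
    φ (((leftBlock v).adjugate * rightBlock v) k l) =
      ((leftBlock fun k c => φ (v k c)).adjugate * rightBlock fun k c => φ (v k c)) k l := by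
  rw [← Matrix.map_apply (f := φ), Matrix.map_mul, ← RingHom.mapMatrix_apply, RingHom.map_adjugate,
    RingHom.mapMatrix_apply, map_leftBlock, map_rightBlock]

theorem exists_ne_zero_forall_evalInt_ne_zero {ι K : Type*} [Finite ι] [Field K] [CharZero K]
    {P : MvPolynomial (ι × Fin 2 × Fin 2) ℤ} (hP : P ≠ 0) :
    ∃ P' : MvPolynomial (ι × Fin 2 × Fin 4) K, P' ≠ 0 ∧
      ∀ v : ι → Fin 2 → Fin 4 → K, eval (fun t => v t.1 t.2.1 t.2.2) P' ≠ 0 →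
        (∀ i, (leftBlock (v i)).det ≠ 0) ∧
          evalInt (fun t => ((leftBlock (v t.1))⁻¹ * rightBlock (v t.1)) t.2.1 t.2.2) P ≠ 0 := by
  cases nonempty_fintype ι
  let V (i : ι) (k : Fin 2) (c : Fin 4) : MvPolynomial (ι × Fin 2 × Fin 4) K := X (i, k, c)
  obtain ⟨Q, D, hD, hQ⟩ := exists_map_eq_map_mul_evalInt (B := K)
    (fun t => ((leftBlock (V t.1)).adjugate * rightBlock (V t.1)) t.2.1 t.2.2)
    (fun t => (leftBlock (V t.1)).det) P
  have hdet (v : ι → Fin 2 → Fin 4 → K) (i : ι) :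
      eval (fun t => v t.1 t.2.1 t.2.2) (leftBlock (V i)).det = (leftBlock (v i)).det := by
    simp [RingHom.map_det, map_leftBlock, V]
  have hQv (v : ι → Fin 2 → Fin 4 → K) (hv : ∀ i, (leftBlock (v i)).det ≠ 0) :
      eval (fun t => v t.1 t.2.1 t.2.2) Q = eval (fun t => v t.1 t.2.1 t.2.2) D *
        evalInt (fun t => ((leftBlock (v t.1))⁻¹ * rightBlock (v t.1)) t.2.1 t.2.2) P := by
    refine hQ _ _ fun t => ?_
    rw [hdet, map_adjugate_leftBlock_mul_rightBlock, Matrix.inv_def, Matrix.smul_mul,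
      Matrix.smul_apply, smul_eq_mul, Ring.inverse_eq_inv', mul_inv_cancel_left₀ (hv _)]
    simp [V]
  refine ⟨Q * ∏ i, (leftBlock (V i)).det, ?_, fun v hv => ?_⟩
  · obtain ⟨x, hx⟩ := exists_evalInt_ne_zero (A := K) hP
    choose v hleft hright using fun i => exists_leftBlock_eq_rightBlock_eq 1
      (.of fun k l => x (i, k, l))
    have hD0 : eval (fun t => v t.1 t.2.1 t.2.2) D = 1 := by
      refine MonoidHom.mem_mker.1 (Submonoid.closure_le.2 (Set.range_subset_iff.2 fun t => ?_) hD)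
      simp [MonoidHom.mem_mker, hdet, hleft]
    intro h
    have := congrArg (eval fun t => v t.1 t.2.1 t.2.2) h
    simp [hQv v (by simp [hleft]), hD0, hdet, hleft, hright, hx] at this
  · simp only [map_mul, map_prod, hdet, mul_ne_zero_iff, Finset.prod_ne_zero_iff] at hv
    have hdetv := fun i => hv.2 i (Finset.mem_univ i)
    exact ⟨hdetv, right_ne_zero_of_mul (hQv v hdetv ▸ hv.1)⟩

theorem generalLines_of_forall_graphLine {s : ℕ} {p : (Fin s → Submodule ℂ C4) → Prop}
    {P : MvPolynomial (Fin s × Fin 2 × Fin 2) ℤ} (hP : P ≠ 0)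
    (h : ∀ m : Fin s → Matrix (Fin 2) (Fin 2) ℂ, evalInt (fun t => m t.1 t.2.1 t.2.2) P ≠ 0 →
      (Pairwise fun i j => (m i - m j).det ≠ 0) → p fun i => graphLine (m i)) :
    GeneralLines s p := by
  obtain ⟨D, hD, hpair⟩ := exists_ne_zero_forall_det_sub_ne_zero (Fin s) (Fin 2) ℂ
  obtain ⟨P', hP', hv⟩ := exists_ne_zero_forall_evalInt_ne_zero (K := ℂ) (mul_ne_zero hP hD)
  refine ⟨P', hP', fun v hP'v => ?_⟩
  obtain ⟨hdet, hPD⟩ := hv v hP'v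
  rw [map_mul, mul_ne_zero_iff] at hPD
  let m (i : Fin s) := (leftBlock (v i))⁻¹ * rightBlock (v i)
  have hspan (i : Fin s) : Submodule.span ℂ {v i 0, v i 1} = graphLine (m i) :=
    span_eq_graphLine (hdet i) (Matrix.mul_nonsing_inv_cancel_left _ _ (hdet i).isUnit)
  have hm := hpair m hPD.2
  simp only [hspan]
  exact ⟨fun i => linearIndependent_of_det_leftBlock_ne_zero (hdet i),
    fun i j hij => graphLine_inf_graphLine (hm hij), h m hPD.1 hm⟩

end GeneralLines

end SixLines

/-- For six general lines in `P^3`, the Waldschmidt constant of the ideal of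
their union is `72/19`: writing `I^{(m)} = ⋂ᵢ I(Lᵢ)^m`,
`inf_{m ≥ 1} α(I^{(m)})/m = 72/19`. -/
theorem stmt_15 :
    GeneralLines 6 (fun L =>
      (⨅ m : ℕ+, (alphaDeg (⨅ i, (lineIdeal (L i)) ^ (m : ℕ)) : ℝ) / (m : ℝ)) =
        72 / 19) := by
  obtain ⟨P, hP, hlower⟩ := SixLines.exists_ne_zero_forall_mul_le
  obtain ⟨P', hP', hupper⟩ := SixLines.exists_ne_zero_forall_exists_mem_pow
  refine SixLines.generalLines_of_forall_graphLine (mul_ne_zero hP hP') fun m hm hdet => ?_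
  rw [map_mul, mul_ne_zero_iff] at hm
  obtain ⟨F, hF0, hFd, hF⟩ := hupper m hm.2
  exact_mod_cast SixLines.iInf_alphaDeg_div_eq (n := 19) hF0 hFd hF (hlower m hm.1 hdet)
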